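/- arXiv:math-ph/0411060 — 7 statements merged into one kernel-verified Lean document; each statement's English description precedes it below -/
import Mathlib

section
/- Let F : [a,b] × ℝ → ℝ be continuous and Lipschitz in its second argument (there is L ≥ 0 with |F(t,x) − F(t,x')| ≤ L|x − x'| for all t ∈ [a,b] and x, x' ∈ ℝ). Let z₋, z, z₊ : [a,b] → ℝ be differentiable with z₋(a) ≤ z(a) ≤ z₊(a), and suppose that for all t ∈ [a,b] one has z₋'(t) − F(t, z₋(t)) ≤ 0, z'(t) − F(t, z(t)) = 0, and z₊'(t) − F(t, z₊(t)) ≥ 0. Then z₋(t) ≤ z(t) ≤ z₊(t) for all t ∈ [a,b]. -/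
open Set

/-! Both inequalities are instances of one comparison: if `u' - F(t,u) ≤ v' - F(t,v)` and
`u(a) ≤ v(a)`, then `u ≤ v`. For every `ε > 0` the difference `u - v` stays below the fence
`B(t) = ε exp((L+1)(t-a))`: where it touches the fence, `u - v = B > 0`, so the Lipschitz bound gives
`(u - v)' ≤ F(t,u) - F(t,v) ≤ L B < (L+1) B = B'`, and Mathlib's fencing theorem
`image_le_of_deriv_right_lt_deriv_boundary` applies. Letting `ε → 0` yields `u ≤ v`. -/

/-- Comparison of two functions with ordered initial values and ordered defects. -/
lemma le_of_defect_le (a b : ℝ) (F : ℝ → ℝ → ℝ) (L : ℝ)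
    (hF_lip : ∀ t ∈ Icc a b, ∀ x x' : ℝ, |F t x - F t x'| ≤ L * |x - x'|)
    (u v u' v' : ℝ → ℝ)
    (hu : ∀ t ∈ Icc a b, HasDerivWithinAt u (u' t) (Icc a b) t)
    (hv : ∀ t ∈ Icc a b, HasDerivWithinAt v (v' t) (Icc a b) t)
    (h0 : u a ≤ v a)
    (hP : ∀ t ∈ Icc a b, u' t - F t (u t) ≤ v' t - F t (v t)) :
    ∀ t ∈ Icc a b, u t ≤ v t := by
  intro t ht
  have fence : ∀ ε > 0, u t - v t ≤ ε * Real.exp ((L + 1) * (t - a)) := by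
    intro ε hε
    have hd : ∀ x ∈ Icc a b,
        HasDerivWithinAt (fun s => u s - v s) (u' x - v' x) (Icc a b) x :=
      fun x hx => (hu x hx).fun_sub (hv x hx)
    refine image_le_of_deriv_right_lt_deriv_boundary (f := fun s => u s - v s)
      (f' := fun s => u' s - v' s) (B := fun s => ε * Real.exp ((L + 1) * (s - a)))
      (B' := fun s => ε * (Real.exp ((L + 1) * (s - a)) * (L + 1)))
      (fun x hx => (hd x hx).continuousWithinAt) ?_ ?_ ?_ ?_ ht
    · intro x hx
      exact (hd x (Ico_subset_Icc_self hx)).mono_of_mem_nhdsWithin (Icc_mem_nhdsGE_of_mem hx)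
    · simp only [sub_self, mul_zero, Real.exp_zero, mul_one]
      linarith
    · intro x
      have h : HasDerivAt (fun s : ℝ => (L + 1) * (s - a)) (L + 1) x := by
        simpa using ((hasDerivAt_id x).sub_const a).const_mul (L + 1)
      exact h.exp.const_mul ε
    · intro x hx hxB
      have hx' := Ico_subset_Icc_self hx
      have hpos : 0 < ε * Real.exp ((L + 1) * (x - a)) := by positivity
      have hLip := (le_abs_self _).trans (hF_lip x hx' (u x) (v x))
      rw [hxB, abs_of_pos hpos] at hLip
      linarith [hP x hx']
  refine sub_nonpos.mp (le_of_forall_pos_le_add fun δ hδ => ?_)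
  have h := fence (δ / Real.exp ((L + 1) * (t - a))) (by positivity)
  rw [div_mul_cancel₀ _ (Real.exp_pos _).ne'] at h
  linarith

/-- Theorem 4.1 (classical comparison of sub- and supersolutions): if
`z₋' - F(t,z₋) ≤ 0 = z' - F(t,z) ≤ z₊' - F(t,z₊)` on `[a,b]` and the initial
values are ordered, then `z₋ ≤ z ≤ z₊` on `[a,b]`. -/
theorem comparison_sub_super_solutions
    (a b : ℝ) (F : ℝ → ℝ → ℝ) (L : ℝ) (hL : 0 ≤ L)
    (hF_cont : ContinuousOn (Function.uncurry F) (Set.Icc a b ×ˢ (Set.univ : Set ℝ)))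
    (hF_lip : ∀ t ∈ Set.Icc a b, ∀ x x' : ℝ, |F t x - F t x'| ≤ L * |x - x'|)
    (zm z zp : ℝ → ℝ) (zm' z' zp' : ℝ → ℝ)
    (hzm : ∀ t ∈ Set.Icc a b, HasDerivWithinAt zm (zm' t) (Set.Icc a b) t)
    (hz : ∀ t ∈ Set.Icc a b, HasDerivWithinAt z (z' t) (Set.Icc a b) t)
    (hzp : ∀ t ∈ Set.Icc a b, HasDerivWithinAt zp (zp' t) (Set.Icc a b) t)
    (h0m : zm a ≤ z a) (h0p : z a ≤ zp a)
    (hPm : ∀ t ∈ Set.Icc a b, zm' t - F t (zm t) ≤ 0)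
    (hP : ∀ t ∈ Set.Icc a b, z' t - F t (z t) = 0)
    (hPp : ∀ t ∈ Set.Icc a b, 0 ≤ zp' t - F t (zp t)) :
    ∀ t ∈ Set.Icc a b, zm t ≤ z t ∧ z t ≤ zp t := by
  intro t ht
  exact ⟨le_of_defect_le a b F L hF_lip zm z zm' z' hzm hz h0m
      (fun s hs => (hPm s hs).trans (hP s hs).ge) t ht,
    le_of_defect_le a b F L hF_lip z zp z' zp' hz hzp h0p
      (fun s hs => (hP s hs).le.trans (hPp s hs)) t ht⟩
end

section
/- Consider the Cauchy problem ζ'(t) + V(ζ(t)) = g(t), ζ(0) = ζ₀, where V : ℝ → ℝ is locally Lipschitz, g : ℝ → ℝ is continuous, and K ≥ 0 satisfies |g(t)| ≤ K for all t. Assume K − V(s) > 0 for all s ≥ ζ₀ with ∫_{ζ₀}^{+∞} ds/(K − V(s)) = +∞, and K + V(s) > 0 for all s ≤ ζ₀ with ∫_{−∞}^{ζ₀} ds/(K + V(s)) = +∞. Then for every b > 0 there exists M > 0 such that every differentiable ζ : [0,b] → ℝ with ζ(0) = ζ₀ and ζ'(t) + V(ζ(t)) = g(t) on [0,b] satisfies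 |ζ(t)| ≤ M for all t ∈ [0,b]; in particular the solution does not blow up in finite time. -/
/-!
The time-change function `F(s) = ∫_{ζ₀}^s du / (K - V(u))` straightens the upper comparison equation
`z' = K - V(z)`: along any solution with `ζ ≥ ζ₀` one has
`(F ∘ ζ)' = (g - V(ζ)) / (K - V(ζ)) ≤ 1`. Hence `F(ζ(t))` cannot cross the line `2 t`, and since
`F → ∞` this bounds `ζ` from above on `[0, b]`, with a bound depending only on `F` and `b`
(`exists_upper_bound`). The lower bound is the same statement for `-ζ`, which solves the equation
with `V` and `g` replaced by `-V(-·)` and `-g`.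
-/

open Set Filter Topology

/-- One-sided a priori bound, uniform over all forcing terms `g ≤ K` and all solutions starting
at `ζ₀`. -/
theorem exists_upper_bound (V : ℝ → ℝ) (hV : Continuous V) (K ζ₀ : ℝ)
    (hpos : ∀ s, ζ₀ ≤ s → 0 < K - V s)
    (hdiv : Tendsto (fun R => ∫ s in ζ₀..R, (K - V s)⁻¹) atTop atTop) (b : ℝ) :
    ∃ M : ℝ, ∀ g ζ : ℝ → ℝ, (∀ t, g t ≤ K) → ζ 0 = ζ₀ →
      (∀ t ∈ Set.Icc (0 : ℝ) b,
        HasDerivWithinAt ζ (g t - V (ζ t)) (Set.Icc (0 : ℝ) b) t) →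
      ∀ t ∈ Set.Icc (0 : ℝ) b, ζ t ≤ M := by
  -- Freezing `V` below `ζ₀` makes the integrand positive and continuous on all of `ℝ`, so that
  -- `F` is `C¹` and negative to the left of `ζ₀`, wherever `ζ` may go.
  set w : ℝ → ℝ := fun s => (K - V (max ζ₀ s))⁻¹ with hw
  have hWpos : ∀ s, 0 < K - V (max ζ₀ s) := fun s => hpos _ (le_max_left _ _)
  have hwpos : ∀ s, 0 < w s := fun s => inv_pos.2 (hWpos s)
  have hwc : Continuous w :=
    (continuous_const.sub (hV.comp (continuous_const.max continuous_id))).inv₀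
      fun s => (hWpos s).ne'
  set F : ℝ → ℝ := fun x => ∫ s in ζ₀..x, w s with hF
  have hFd : ∀ x, HasDerivAt F (w x) x := fun x => (hwc.integral_hasStrictDerivAt ζ₀ x).hasDerivAt
  have hF0 : F ζ₀ = 0 := intervalIntegral.integral_same
  have hFmono : StrictMono F :=
    strictMono_of_deriv_pos fun x => by rw [(hFd x).deriv]; exact hwpos x
  have hFeq : ∀ R, ζ₀ ≤ R → F R = ∫ s in ζ₀..R, (K - V s)⁻¹ := by
    intro R hR
    refine intervalIntegral.integral_congr fun s hs => ?_
    rw [uIcc_of_le hR] at hs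
    simp only [hw, max_eq_right hs.1]
  obtain ⟨R, hR, hRb⟩ :=
    ((eventually_ge_atTop ζ₀).and (hdiv.eventually_ge_atTop (2 * b))).exists
  refine ⟨R, fun g ζ hg h0 hζ t ht => ?_⟩
  have key : F (ζ t) ≤ 2 * t := by
    refine image_le_of_deriv_right_lt_deriv_boundary' (f := F ∘ ζ) (B := fun t => 2 * t)
      (f' := fun t => w (ζ t) * (g t - V (ζ t))) (B' := fun _ => 2) (a := 0) (b := b)
      ?_ ?_ ?_ (by fun_prop) ?_ ?_ ht
    · exact fun s hs => ((hFd (ζ s)).comp_hasDerivWithinAt s (hζ s hs)).continuousWithinAt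
    · intro s hs
      exact ((hFd (ζ s)).comp_hasDerivWithinAt s (hζ s (Ico_subset_Icc_self hs))).mono_of_mem_nhdsWithin
        (Icc_mem_nhdsGE_of_mem hs)
    · simp [h0, hF0]
    · intro s _
      simpa using ((hasDerivAt_id s).const_mul (2 : ℝ)).hasDerivWithinAt
    · intro s hs hc
      -- A contact point has `F (ζ s) = 2 s ≥ 0`, hence lies in the region `ζ s ≥ ζ₀`.
      have hle : ζ₀ ≤ ζ s := by
        rw [← hFmono.le_iff_le, hF0]
        have : F (ζ s) = 2 * s := hc
        linarith [hs.1]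
      have h1 : w (ζ s) * (g s - V (ζ s)) ≤ w (ζ s) * (K - V (ζ s)) :=
        mul_le_mul_of_nonneg_left (by linarith [hg s]) (hwpos _).le
      have h2 : w (ζ s) * (K - V (ζ s)) = 1 := by
        simp only [hw, max_eq_right hle]
        exact inv_mul_cancel₀ (hpos _ hle).ne'
      linarith
  rw [← hFmono.le_iff_le]
  linarith [hFeq R hR, ht.2]

/-- Theorem 4.2, part (1): global existence criterion. If `K - V(s) > 0` for
`s ≥ ζ₀` with `∫_{ζ₀}^{+∞} ds/(K - V(s)) = +∞` and `K + V(s) > 0` for `s ≤ ζ₀`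
with `∫_{-∞}^{ζ₀} ds/(K + V(s)) = +∞`, then any solution of
`ζ' + V(ζ) = g(t)`, `ζ(0) = ζ₀`, with `|g| ≤ K`, stays bounded on every
bounded time interval: it does not blow up in finite time. -/
theorem global_existence_criterion
    (V : ℝ → ℝ) (hV : LocallyLipschitz V)
    (g : ℝ → ℝ) (hg : Continuous g)
    (K : ℝ) (hK : 0 ≤ K) (hgK : ∀ t, |g t| ≤ K) (ζ₀ : ℝ)
    (hposP : ∀ s, ζ₀ ≤ s → 0 < K - V s)
    (hdivP : Tendsto (fun R => ∫ s in ζ₀..R, (K - V s)⁻¹) atTop atTop)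
    (hposM : ∀ s, s ≤ ζ₀ → 0 < K + V s)
    (hdivM : Tendsto (fun R => ∫ s in R..ζ₀, (K + V s)⁻¹) atBot atTop) :
    ∀ b : ℝ, 0 < b → ∃ M : ℝ, 0 < M ∧
      ∀ ζ : ℝ → ℝ, ζ 0 = ζ₀ →
        (∀ t ∈ Set.Icc (0 : ℝ) b,
          HasDerivWithinAt ζ (g t - V (ζ t)) (Set.Icc (0 : ℝ) b) t) →
        ∀ t ∈ Set.Icc (0 : ℝ) b, |ζ t| ≤ M := by
  intro b _
  obtain ⟨M₁, h₁⟩ := exists_upper_bound V hV.continuous K ζ₀ hposP hdivP b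
  obtain ⟨M₂, h₂⟩ := exists_upper_bound (fun s => -V (-s))
    (hV.continuous.comp continuous_neg).neg K (-ζ₀)
    (fun s hs => by simpa using hposM (-s) (by linarith))
    (by
      refine (hdivM.comp tendsto_neg_atTop_atBot).congr fun R => ?_
      have := intervalIntegral.integral_comp_neg (a := -ζ₀) (b := R) fun s => (K + V s)⁻¹
      simpa using this.symm) b
  refine ⟨max 1 (max M₁ M₂), by positivity, fun ζ h0 hζ t ht => abs_le'.2 ⟨?_, ?_⟩⟩
  · exact (h₁ g ζ (fun t => (abs_le.1 (hgK t)).2) h0 hζ t ht).trans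
      ((le_max_left _ _).trans (le_max_right _ _))
  · refine (h₂ (fun t => -g t) (fun t => -ζ t) (fun t => ?_) (by simp [h0]) (fun s hs => ?_) t
      ht).trans ((le_max_right _ _).trans (le_max_right _ _))
    · linarith [(abs_le.1 (hgK t)).1]
    · exact (hζ s hs).neg.congr_deriv (by simp only [neg_neg]; ring)
end

section
/- Consider the Cauchy problem ζ'(t) + V(ζ(t)) = g(t), ζ(0) = ζ₀, where V : ℝ → ℝ is locally Lipschitz, g : ℝ → ℝ is continuous, and K ≥ 0 satisfies |g(t)| ≤ K for all t. Assume K + V(s) < 0 for all s ≥ ζ₀ and that T* := −∫_{ζ₀}^{+∞} ds/(K + V(s)) is finite (and positive). Then every differentiable ζ : [0,T] → ℝ with ζ(0) = ζ₀ and ζ'(t) + V(ζ(t)) = g(t) on [0,T] satisfies T < T*; i.e. the solution blows up (positively) in finite time with lifespan at most T*. -/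
/-!
With `w s = -(K + V s)⁻¹ > 0` on `[ζ₀, ∞)` and the travel time `P s = ∫_{ζ₀}^s w`, the comparison
equation `ż + V z = -K` reads `(P ∘ z)' = 1`. A solution `ζ` of the forced equation cannot cross
the level `ζ₀` downwards, since there `ζ' = g - V ζ₀ ≥ -K - V ζ₀ > 0`; hence
`(P ∘ ζ)' = w(ζ) (g - V ζ) ≥ 1`, and `T ≤ P (ζ T) < ∫_{ζ₀}^∞ w = T*`, the last inequality being
strict because `w > 0`.
-/

open Set Filter Topology MeasureTheory

/-- Theorem 4.2, part (2): blow-up criterion. If `K + V(s) < 0` for all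
`s ≥ ζ₀` and `T* = -∫_{ζ₀}^{+∞} ds/(K + V(s))` is finite and positive, then
any solution of `ζ' + V(ζ) = g(t)`, `ζ(0) = ζ₀`, with `|g| ≤ K`, cannot be
extended to a closed interval `[0,T]` with `T ≥ T*`: the solution blows up
(positively) in finite time with lifespan at most `T*`. -/
theorem blowup_criterion_lifespan_bound
    (V : ℝ → ℝ) (hV : LocallyLipschitz V)
    (g : ℝ → ℝ) (hg : Continuous g)
    (K : ℝ) (hK : 0 ≤ K) (hgK : ∀ t, |g t| ≤ K) (ζ₀ : ℝ)
    (hneg : ∀ s, ζ₀ ≤ s → K + V s < 0)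
    (hInt : IntegrableOn (fun s => (K + V s)⁻¹) (Set.Ici ζ₀))
    (Tstar : ℝ) (hT : Tstar = -∫ s in Set.Ici ζ₀, (K + V s)⁻¹)
    (hTpos : 0 < Tstar) :
    ∀ T : ℝ, ∀ ζ : ℝ → ℝ, ζ 0 = ζ₀ →
      (∀ t ∈ Set.Icc (0 : ℝ) T,
        HasDerivWithinAt ζ (g t - V (ζ t)) (Set.Icc (0 : ℝ) T) t) →
      T < Tstar := by
  intro T ζ h0 hζ
  rcases lt_or_ge T 0 with hT0 | hT0
  · exact hT0.trans hTpos
  have hVc : Continuous V := hV.continuous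
  have hcont : ContinuousOn ζ (Icc 0 T) := fun t ht => (hζ t ht).continuousWithinAt
  have hright : ∀ t ∈ Ico (0 : ℝ) T, HasDerivWithinAt ζ (g t - V (ζ t)) (Ici t) t := fun t ht =>
    (hζ t (Ico_subset_Icc_self ht)).mono_of_mem_nhdsWithin (Icc_mem_nhdsGE_of_mem ht)
  have hlow : ∀ t ∈ Icc (0 : ℝ) T, ζ₀ ≤ ζ t := by
    intro t ht
    have := image_le_of_deriv_right_lt_deriv_boundary (f := fun t => -ζ t)
      (f' := fun t => -(g t - V (ζ t))) (B := fun _ => -ζ₀) (B' := fun _ => 0) hcont.neg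
      (fun t ht => (hright t ht).neg) (by simp [h0]) (fun x => hasDerivAt_const x _)
      (fun x _ hx => by
        have hx' : ζ x = ζ₀ := neg_injective hx
        have h1 := hneg ζ₀ le_rfl
        have h2 := neg_le_of_abs_le (hgK x)
        rw [hx']; linarith) ht
    exact neg_le_neg_iff.mp this
  -- Freezing `V` below `ζ₀` makes the reciprocal continuous and positive on the whole line.
  let w : ℝ → ℝ := fun s => -(K + V (max s ζ₀))⁻¹
  have hne : ∀ s, K + V (max s ζ₀) < 0 := fun s => hneg _ (le_max_right _ _)
  have hw : Continuous w :=
    ((continuous_const.add (hVc.comp (continuous_id.max continuous_const))).inv₀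
      fun s => (hne s).ne).neg
  have hwpos : ∀ s, 0 < w s := fun s => neg_pos.mpr (inv_lt_zero.mpr (hne s))
  have hweq : EqOn (fun s => -(K + V s)⁻¹) w (Ici ζ₀) := fun s hs => by
    simp only [w, max_eq_left (mem_Ici.mp hs)]
  have hwint : IntegrableOn w (Ici ζ₀) := hInt.neg.congr_fun hweq measurableSet_Ici
  have hTw : Tstar = ∫ s in Ici ζ₀, w s := by
    rw [hT, ← integral_neg, setIntegral_congr_fun measurableSet_Ici hweq]
  let P : ℝ → ℝ := fun s => ∫ x in ζ₀..s, w x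
  have hP : ∀ s, HasDerivAt P (w s) s := fun s => hw.integral_hasStrictDerivAt ζ₀ s |>.hasDerivAt
  have hPc : Continuous P := continuous_iff_continuousAt.mpr fun s => (hP s).continuousAt
  have hTP : T ≤ P (ζ T) :=
    image_le_of_deriv_right_le_deriv_boundary (f := fun t => t) (f' := fun _ => 1)
      (B := fun t => P (ζ t)) (B' := fun t => w (ζ t) * (g t - V (ζ t))) continuousOn_id
      (fun t _ => hasDerivWithinAt_id t _) (by simp [h0, P])
      (hPc.comp_continuousOn hcont)
      (fun t ht => (hP (ζ t)).comp_hasDerivWithinAt t (hright t ht))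
      (fun t ht => by
        have hl := hlow t (Ico_subset_Icc_self ht)
        have h1 := hneg _ hl
        have h2 := neg_le_of_abs_le (hgK t)
        have h3 : w (ζ t) = (-(K + V (ζ t)))⁻¹ := by simp only [w, max_eq_left hl, inv_neg]
        rw [h3, inv_mul_eq_div, one_le_div (by linarith)]
        linarith) (right_mem_Icc.mpr hT0)
  have hlT := hlow T (right_mem_Icc.mpr hT0)
  have hstep : P (ζ T) < P (ζ T + 1) := by
    have := intervalIntegral.intervalIntegral_pos_of_pos
      (hw.intervalIntegrable (ζ T) (ζ T + 1)) hwpos (by linarith)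
    have hadd := intervalIntegral.integral_add_adjacent_intervals
      (hw.intervalIntegrable ζ₀ (ζ T)) (hw.intervalIntegrable (μ := volume) (ζ T) (ζ T + 1))
    simp only [P]; linarith
  have hle : P (ζ T + 1) ≤ Tstar := by
    simp only [P]
    rw [hTw, intervalIntegral.integral_of_le (by linarith)]
    exact setIntegral_mono_set hwint (Eventually.of_forall fun s => (hwpos s).le)
      (HasSubset.Subset.eventuallyLE fun s hs => hs.1.le)
  linarith
end

section
/- Let α > 0, T* > 0, let g : [0,T*) → ℝ be continuous with |g(t)| ≤ K for all t and some K ≥ 0, and let ζ : [0,T*) → ℝ be differentiable with ζ'(t) + α ζ(t)² = g(t) for all t ∈ [0,T*) and ζ(t) → −∞ as t → T*⁻. Then lim_{t→T*⁻} (T* − t) ζ(t) = −1/α; i.e. ζ(t) ∼ 1/(α(t − T*)) near the blow-up time. -/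
/-!
The reciprocal `u = 1 / ζ` linearizes the blow-up: it tends to `0` at `T*` and satisfies
`u' = α - g u²`. Since `g` is bounded, `u' → α`, so L'Hôpital's rule gives
`u(t) / (T* - t) → -α`, and inverting this limit is the claim.
-/

open Set Filter Topology

/-- Blow-up asymptotics for the Riccati equation `ζ' + α ζ² = g(t)` with
bounded forcing: if `ζ(t) → -∞` as `t → T*⁻`, then
`(T* - t) ζ(t) → -1/α`, i.e. `ζ(t) ∼ 1/(α(t - T*))` near the blow-up time. -/
theorem riccati_blowup_asymptotics
    (α Tstar K : ℝ) (hα : 0 < α) (hT : 0 < Tstar) (hK : 0 ≤ K)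
    (g : ℝ → ℝ) (hg : ContinuousOn g (Set.Ico 0 Tstar))
    (hgK : ∀ t ∈ Set.Ico (0 : ℝ) Tstar, |g t| ≤ K)
    (ζ : ℝ → ℝ)
    (hζ : ∀ t ∈ Set.Ico (0 : ℝ) Tstar,
      HasDerivWithinAt ζ (g t - α * ζ t ^ 2) (Set.Ico (0 : ℝ) Tstar) t)
    (hblow : Tendsto ζ (nhdsWithin Tstar (Set.Iio Tstar)) atBot) :
    Tendsto (fun t => (Tstar - t) * ζ t) (nhdsWithin Tstar (Set.Iio Tstar))
      (nhds (-(1 / α))) := by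
  have hIoo : ∀ᶠ t in 𝓝[<] Tstar, t ∈ Ioo 0 Tstar := Ioo_mem_nhdsLT hT
  have hneg : ∀ᶠ t in 𝓝[<] Tstar, ζ t < 0 := hblow.eventually (eventually_lt_atBot 0)
  have hu : Tendsto (fun t => (ζ t)⁻¹) (𝓝[<] Tstar) (𝓝 0) :=
    tendsto_inv_atBot_zero.comp hblow
  have hu' : ∀ᶠ t in 𝓝[<] Tstar,
      HasDerivAt (fun s => (ζ s)⁻¹) (α - g t * (ζ t)⁻¹ ^ 2) t := by
    filter_upwards [hIoo, hneg] with t ht hlt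
    have h := ((hζ t ⟨ht.1.le, ht.2⟩).hasDerivAt (Ico_mem_nhds ht.1 ht.2)).fun_inv hlt.ne
    have e : α - g t * (ζ t)⁻¹ ^ 2 = -(g t - α * ζ t ^ 2) / ζ t ^ 2 := by
      have := hlt.ne
      field_simp
      ring
    rwa [e]
  have hv : Tendsto (fun t => Tstar - t) (𝓝[<] Tstar) (𝓝 0) := by
    have h : Tendsto (fun t : ℝ => Tstar - t) (𝓝 Tstar) (𝓝 (Tstar - Tstar)) :=
      tendsto_const_nhds.sub tendsto_id
    rw [sub_self] at h
    exact h.mono_left nhdsWithin_le_nhds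
  have hgu : Tendsto (fun t => g t * (ζ t)⁻¹ ^ 2) (𝓝[<] Tstar) (𝓝 0) := by
    have hb : Tendsto (fun t => K * (ζ t)⁻¹ ^ 2) (𝓝[<] Tstar) (𝓝 0) := by
      simpa using (hu.pow 2).const_mul K
    refine squeeze_zero_norm' ?_ hb
    filter_upwards [hIoo] with t ht
    rw [Real.norm_eq_abs, abs_mul, abs_of_nonneg (sq_nonneg (ζ t)⁻¹)]
    exact mul_le_mul_of_nonneg_right (hgK t ⟨ht.1.le, ht.2⟩) (sq_nonneg _)
  have hratio : Tendsto (fun t => (α - g t * (ζ t)⁻¹ ^ 2) / (-1)) (𝓝[<] Tstar) (𝓝 (-α)) := by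
    simpa [div_neg] using (hgu.const_sub α).div_const (-1)
  have hlim : Tendsto (fun t => (ζ t)⁻¹ / (Tstar - t)) (𝓝[<] Tstar) (𝓝 (-α)) :=
    HasDerivAt.lhopital_zero_nhdsLT hu'
      (Eventually.of_forall fun t => (hasDerivAt_id t).const_sub Tstar)
      (Eventually.of_forall fun _ => by norm_num) hu hv hratio
  have hinv := hlim.inv₀ (neg_ne_zero.mpr hα.ne')
  rw [one_div, ← inv_neg]
  refine hinv.congr fun t => ?_
  rw [inv_div, div_inv_eq_mul]
end

section
/- Let t > 0 and let ξ : [0,t] → ℂ be continuous. Then the integral on the left-hand side below converges and (2π)^{−3} ∫_{ℝ³} (1 + |k|²)^{−1} | ∫₀ᵗ ξ(s) cos((t − s)|k|) ds |² dk = (1/(4π)) ∫₀ᵗ |ξ(s)|² ds − (1/(8π)) ∫₀ᵗ ∫₀ᵗ conj(ξ(s)) ξ(s') ( e^{−|s − s'|} + e^{−(2t − s − s')} ) ds ds'. -/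
open Set MeasureTheory Real Complex
open scoped FourierTransform
open Filter Topology

/-!
Write `F(x) = ∫₀ᵗ ξ(s) cos((t - s) x) ds`. In polar coordinates the left-hand integral is
`4π ∫₀^∞ x²/(1 + x²) |F(x)|² dx`, and since `F` is even and `x²/(1 + x²) = 1 - 1/(1 + x²)` it equals
`2π (∫_ℝ |F|² - ∫_ℝ |F(x)|²/(1 + x²) dx)`.

Both integrals come from one computation. For the weight `w_a(x) = (1 + (x/a)²)⁻¹`, Fubini and
`∫_ℝ cos(b x) w_a(x) dx = a π e^{-a|b|}` (Fourier inversion for `e^{-|v|}`) give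
`∫_ℝ w_a |F|² = (aπ/2) ∫₀ᵗ∫₀ᵗ conj(ξ(s)) ξ(s') (e^{-a|s-s'|} + e^{-a(2t-s-s')}) ds ds'`
(`integral_lorentz_mul`). The case `a = 1` is the Lorentzian-weighted integral. As `a → ∞` the weights
increase to `1`, the kernels `(a/2) e^{-a|s-s'|}` form an approximate identity and the reflected
kernels vanish, so monotone convergence on the left and dominated convergence on the right give
the Plancherel identity `∫_ℝ |F|² = π ∫₀ᵗ |ξ|²` (`integral_sq_cosTransform`), together with the
integrability of `|F|²`.
-/

/-! ### The cosine transform of a Lorentzian -/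

lemma integral_exp_neg_abs : ∫ x : ℝ, Real.exp (-|x|) = 2 := by
  rw [integral_comp_abs (f := fun x => Real.exp (-x)), integral_exp_neg_Ioi_zero, mul_one]

lemma integrable_exp_neg_abs : Integrable (fun x : ℝ => Real.exp (-|x|)) := by
  by_contra h
  have := integral_exp_neg_abs
  rw [integral_undef h] at this
  norm_num at this

/-- The Fourier transform of `e^{-|v|}` is a Lorentzian. -/
lemma fourier_exp_neg_abs (w : ℝ) :
    𝓕 (fun v : ℝ => ((Real.exp (-|v|) : ℝ) : ℂ)) w
      = ((2 * (1 + (2 * π * w) ^ 2)⁻¹ : ℝ) : ℂ) := by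
  rw [Real.fourier_real_eq_integral_exp_smul]
  have hint : Integrable
      (fun v : ℝ => Complex.exp (↑(-2 * π * v * w) * I) • ((Real.exp (-|v|) : ℝ) : ℂ)) := by
    refine integrable_exp_neg_abs.ofReal.bdd_mul (c := 1)
      (Continuous.aestronglyMeasurable (by fun_prop)) (ae_of_all _ fun v => ?_)
    rw [Complex.norm_exp_ofReal_mul_I]
  rw [← intervalIntegral.integral_Iic_add_Ioi (b := 0) hint.integrableOn hint.integrableOn]
  have h1 : ∫ v in Iic (0 : ℝ),
        Complex.exp (↑(-2 * π * v * w) * I) • ((Real.exp (-|v|) : ℝ) : ℂ)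
      = ∫ v in Iic (0 : ℝ), Complex.exp ((1 - 2 * π * w * I) * v) := by
    refine setIntegral_congr_fun measurableSet_Iic fun v hv => ?_
    simp only [smul_eq_mul]
    rw [abs_of_nonpos hv, Complex.ofReal_exp, ← Complex.exp_add]
    congr 1; push_cast; ring
  have h2 : ∫ v in Ioi (0 : ℝ),
        Complex.exp (↑(-2 * π * v * w) * I) • ((Real.exp (-|v|) : ℝ) : ℂ)
      = ∫ v in Ioi (0 : ℝ), Complex.exp ((-1 - 2 * π * w * I) * v) := by
    refine setIntegral_congr_fun measurableSet_Ioi fun v hv => ?_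
    simp only [smul_eq_mul]
    rw [abs_of_pos hv, Complex.ofReal_exp, ← Complex.exp_add]
    congr 1; push_cast; ring
  rw [h1, h2, integral_exp_mul_complex_Iic (by simp), integral_exp_mul_complex_Ioi (by simp)]
  have e1 : (1 - 2 * π * w * I : ℂ) ≠ 0 := fun h => by simpa using congrArg Complex.re h
  have e2 : (-1 - 2 * π * w * I : ℂ) ≠ 0 := fun h => by simpa using congrArg Complex.re h
  push_cast
  rw [show (1 + (2 * π * w) ^ 2 : ℂ) = -((1 - 2 * π * w * I) * (-1 - 2 * π * w * I)) by
    linear_combination ((2 * π * w : ℂ) ^ 2) * Complex.I_sq]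
  simp only [mul_zero, Complex.exp_zero]
  field_simp
  ring

/-- The value at `b` of the inversion formula for `e^{-|v|}`, rescaled by `x = 2πw`. -/
lemma integral_cos_mul_inv (b : ℝ) :
    ∫ x : ℝ, Real.cos (b * x) * (1 + x ^ 2)⁻¹ = π * Real.exp (-|b|) := by
  have hF : 𝓕 (fun v : ℝ => ((Real.exp (-|v|) : ℝ) : ℂ))
      = fun w : ℝ => ((2 * (1 + (2 * π * w) ^ 2)⁻¹ : ℝ) : ℂ) := funext fourier_exp_neg_abs
  have hFint : Integrable (𝓕 (fun v : ℝ => ((Real.exp (-|v|) : ℝ) : ℂ))) := by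
    rw [hF]
    exact ((integrable_inv_one_add_sq.comp_mul_left' (R := 2 * π)
      (by positivity)).const_mul 2).ofReal
  have hinv := congrFun (Continuous.fourierInv_fourier_eq
    (f := fun v : ℝ => ((Real.exp (-|v|) : ℝ) : ℂ)) (by fun_prop)
    integrable_exp_neg_abs.ofReal hFint) b
  rw [hF, Real.fourierInv_eq'] at hinv
  have hre := congrArg Complex.re hinv
  have hi : Integrable (fun v : ℝ => Complex.exp (↑(2 * π * inner ℝ v b) * I) •
      ((2 * (1 + (2 * π * v) ^ 2)⁻¹ : ℝ) : ℂ)) := by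
    rw [hF] at hFint
    refine hFint.bdd_mul (c := 1) (Continuous.aestronglyMeasurable ?_) (ae_of_all _ fun v => ?_)
    · simp only [RCLike.inner_apply, conj_trivial]; fun_prop
    · rw [Complex.norm_exp_ofReal_mul_I]
  rw [Complex.ofReal_re, ← RCLike.re_eq_complex_re, ← integral_re hi] at hre
  rw [← hre]
  have hs := Measure.integral_comp_mul_left
    (fun x : ℝ => Real.cos (b * x) * (1 + x ^ 2)⁻¹) (2 * π)
  rw [abs_of_pos (by positivity), smul_eq_mul] at hs
  have : ∫ v : ℝ, RCLike.re (Complex.exp (↑(2 * π * inner ℝ v b) * I) •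
      ((2 * (1 + (2 * π * v) ^ 2)⁻¹ : ℝ) : ℂ))
      = 2 * ∫ v : ℝ, Real.cos (b * (2 * π * v)) * (1 + (2 * π * v) ^ 2)⁻¹ := by
    rw [← integral_const_mul]
    refine integral_congr_ae (ae_of_all _ fun v => ?_)
    simp only [smul_eq_mul, RCLike.re_eq_complex_re, Complex.re_mul_ofReal,
      Complex.exp_ofReal_mul_I_re, RCLike.inner_apply, conj_trivial]
    rw [show 2 * π * (b * v) = b * (2 * π * v) by ring]
    ring
  rw [this, hs]
  field_simp

/-- The Lorentzian weight `(1 + (x/a)²)⁻¹` of width `a`, which increases to `1` as `a → ∞`. -/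
noncomputable def lorentz (a x : ℝ) : ℝ := (1 + (x / a) ^ 2)⁻¹

lemma continuous_lorentz (a : ℝ) : Continuous (lorentz a) := by
  unfold lorentz
  exact Continuous.inv₀ (by fun_prop) fun x => by positivity

lemma integrable_lorentz {a : ℝ} (ha : 0 < a) : Integrable (lorentz a) :=
  integrable_inv_one_add_sq.comp_div ha.ne'

lemma lorentz_nonneg (a x : ℝ) : 0 ≤ lorentz a x := by unfold lorentz; positivity

lemma integral_cos_mul_lorentz {a : ℝ} (ha : 0 < a) (b : ℝ) :
    ∫ x : ℝ, Real.cos (b * x) * lorentz a x = a * π * Real.exp (-(a * |b|)) := by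
  have h := Measure.integral_comp_div
    (fun y : ℝ => Real.cos (b * a * y) * (1 + y ^ 2)⁻¹) a
  rw [integral_cos_mul_inv, abs_of_pos ha, abs_mul, abs_of_pos ha, smul_eq_mul] at h
  rw [mul_assoc, mul_comm a |b|, ← h]
  refine integral_congr_ae (ae_of_all _ fun x => ?_)
  simp only [lorentz]
  rw [mul_assoc, mul_div_cancel₀ _ (ne_of_gt ha)]

/-! ### The weighted energy as a quadratic form -/

/-- The value `∫₀ᵗ ξ(s) cos((t - s) x) ds`, as a function of the radial
frequency `x`; it is even in `x`. -/
noncomputable def cosTransform (ξ : ℝ → ℂ) (t x : ℝ) : ℂ :=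
  ∫ s in (0 : ℝ)..t, ξ s * ((Real.cos ((t - s) * x) : ℝ) : ℂ)

/-- The kernel `e^{-a|s-s'|} + e^{-a(2t-s-s')}`. -/
noncomputable def kern (t a s s' : ℝ) : ℝ :=
  Real.exp (-(a * |s - s'|)) + Real.exp (-(a * (2 * t - s - s')))

lemma continuous_cosTransform {ξ : ℝ → ℂ} (hξ : Continuous ξ) (t : ℝ) :
    Continuous (cosTransform ξ t) := by
  unfold cosTransform
  exact intervalIntegral.continuous_parametric_intervalIntegral_of_continuous' (by fun_prop) 0 t

lemma norm_cosTransform_le {ξ : ℝ → ℂ} {C : ℝ} (hC : ∀ s, ‖ξ s‖ ≤ C) (t x : ℝ) :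
    ‖cosTransform ξ t x‖ ≤ C * |t - 0| := by
  refine intervalIntegral.norm_integral_le_of_norm_le_const fun s _ => ?_
  rw [norm_mul, Complex.norm_real, Real.norm_eq_abs]
  calc ‖ξ s‖ * |Real.cos ((t - s) * x)| ≤ ‖ξ s‖ * 1 := by
        gcongr; exact Real.abs_cos_le_one _
    _ ≤ C := by rw [mul_one]; exact hC s

lemma integrable_lorentz_mul {ξ : ℝ → ℂ} (hξ : Continuous ξ) {C : ℝ} (hC : ∀ s, ‖ξ s‖ ≤ C)
    (t : ℝ) {a : ℝ} (ha : 0 < a) :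
    Integrable (fun x => lorentz a x * ‖cosTransform ξ t x‖ ^ 2) := by
  refine (integrable_lorentz ha).mul_bdd (c := (C * |t - 0|) ^ 2)
    (((continuous_cosTransform hξ t).norm.pow 2).aestronglyMeasurable) (ae_of_all _ fun x => ?_)
  rw [Real.norm_of_nonneg (by positivity)]
  gcongr
  exact norm_cosTransform_le hC t x

/-- Fubini together with `2 cos α cos β = cos (α - β) + cos (α + β)` turns the
Lorentzian-weighted energy into a quadratic form in `ξ`. -/
lemma integral_lorentz_mul {ξ : ℝ → ℂ} (hξ : Continuous ξ) {C : ℝ} (hC : ∀ s, ‖ξ s‖ ≤ C)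
    {t : ℝ} (ht : 0 < t) {a : ℝ} (ha : 0 < a) :
    ((∫ x, lorentz a x * ‖cosTransform ξ t x‖ ^ 2 : ℝ) : ℂ) =
      ((a * π / 2 : ℝ) : ℂ) * ∫ s in (0 : ℝ)..t, ∫ s' in (0 : ℝ)..t,
        (starRingEnd ℂ) (ξ s) * ξ s' * (kern t a s s' : ℂ) := by
  set μ : Measure ℝ := volume.restrict (Ioc 0 t) with hμ
  have hξint : Integrable ξ μ :=
    Integrable.of_bound hξ.aestronglyMeasurable C (ae_of_all _ hC)
  have hξint' : Integrable (fun s => (starRingEnd ℂ) (ξ s)) μ :=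
    Integrable.of_bound (Complex.continuous_conj.comp hξ).aestronglyMeasurable C
      (ae_of_all _ fun s => by simpa using hC s)
  have hq := hξint'.mul_prod hξint
  -- the integrand as a function of the frequency and the pair of times
  let h : ℝ → ℝ × ℝ → ℂ := fun x z =>
    ((Real.cos ((t - z.1) * x) * Real.cos ((t - z.2) * x) : ℝ) : ℂ) *
      ((lorentz a x : ℂ) * ((starRingEnd ℂ) (ξ z.1) * ξ z.2))
  have hh : Integrable (Function.uncurry h) (volume.prod (μ.prod μ)) := by
    refine ((integrable_lorentz ha).ofReal.mul_prod hq).bdd_mul (c := 1)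
      (f := fun p : ℝ × ℝ × ℝ =>
        ((Real.cos ((t - p.2.1) * p.1) * Real.cos ((t - p.2.2) * p.1) : ℝ) : ℂ))
      (Continuous.aestronglyMeasurable (by fun_prop)) (ae_of_all _ fun p => ?_)
    rw [Complex.norm_real, Real.norm_eq_abs, abs_mul]
    exact mul_le_one₀ (Real.abs_cos_le_one _) (abs_nonneg _) (Real.abs_cos_le_one _)
  have h1 : ∀ x, ((lorentz a x * ‖cosTransform ξ t x‖ ^ 2 : ℝ) : ℂ) = ∫ z, h x z ∂(μ.prod μ) := by
    intro x
    have e : cosTransform ξ t x = ∫ s, ξ s * ((Real.cos ((t - s) * x) : ℝ) : ℂ) ∂μ :=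
      intervalIntegral.integral_of_le ht.le
    have e' : (starRingEnd ℂ) (cosTransform ξ t x)
        = ∫ s, (starRingEnd ℂ) (ξ s) * ((Real.cos ((t - s) * x) : ℝ) : ℂ) ∂μ := by
      rw [e, ← integral_conj]
      simp only [map_mul, Complex.conj_ofReal]
    rw [Complex.ofReal_mul, Complex.ofReal_pow, ← Complex.conj_mul', e', e, ← integral_prod_mul,
      ← integral_const_mul]
    refine integral_congr_ae (ae_of_all _ fun z => ?_)
    simp only [h]
    push_cast; ring
  have h2 : ∀ s ∈ Ioc 0 t, ∀ s' ∈ Ioc 0 t, ∫ x, h x (s, s') =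
      ((a * π / 2 : ℝ) : ℂ) * ((starRingEnd ℂ) (ξ s) * ξ s' * (kern t a s s' : ℂ)) := by
    intro s hs s' hs'
    have i : ∀ b : ℝ, Integrable (fun x => Real.cos (b * x) * lorentz a x) := fun b =>
      (integrable_lorentz ha).bdd_mul (c := 1) (Continuous.aestronglyMeasurable (by fun_prop))
        (ae_of_all _ fun x => Real.abs_cos_le_one _)
    have e : ∀ x, h x (s, s') = ((Real.cos ((s - s') * x) * lorentz a x
        + Real.cos ((2 * t - s - s') * x) * lorentz a x : ℝ) : ℂ) *
          ((starRingEnd ℂ) (ξ s) * ξ s' / 2) := by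
      intro x
      have hc : Real.cos ((s - s') * x) + Real.cos ((2 * t - s - s') * x)
          = 2 * (Real.cos ((t - s) * x) * Real.cos ((t - s') * x)) := by
        rw [← Real.cos_neg ((s - s') * x), show -((s - s') * x) = (t - s) * x - (t - s') * x by ring,
          show (2 * t - s - s') * x = (t - s) * x + (t - s') * x by ring,
          Real.cos_sub, Real.cos_add]
        ring
      rw [← add_mul, hc]
      simp only [h]
      push_cast; ring
    simp_rw [e]
    rw [integral_mul_const, integral_complex_ofReal, integral_add (i _) (i _),
      integral_cos_mul_lorentz ha, integral_cos_mul_lorentz ha,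
      abs_of_nonneg (show 0 ≤ 2 * t - s - s' by linarith [hs.2, hs'.2]), kern]
    push_cast; ring
  rw [← integral_complex_ofReal]
  simp_rw [h1]
  rw [integral_integral_swap hh, integral_prod (fun z => ∫ x, h x z) hh.integral_prod_right,
    intervalIntegral.integral_of_le ht.le, ← integral_const_mul]
  refine setIntegral_congr_fun measurableSet_Ioc fun s hs => ?_
  rw [intervalIntegral.integral_of_le ht.le, ← integral_const_mul]
  exact setIntegral_congr_fun measurableSet_Ioc fun r hr => h2 s hs r hr

/-! ### The limit of infinite width -/

lemma integral_exp_neg_mul_abs_sub {a : ℝ} (ha : 0 < a) (s : ℝ) :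
    Integrable (fun s' : ℝ => Real.exp (-(a * |s - s'|))) ∧
      ∫ s' : ℝ, Real.exp (-(a * |s - s'|)) = 2 / a := by
  have e : ∀ u : ℝ, Real.exp (-(a * |u|)) = Real.exp (-|a * u|) := fun u => by
    rw [abs_mul, abs_of_pos ha]
  constructor
  · refine Integrable.comp_sub_left (f := fun u : ℝ => Real.exp (-(a * |u|))) ?_ s
    simp_rw [e]
    exact integrable_exp_neg_abs.comp_mul_left' ha.ne'
  · rw [integral_sub_left_eq_self (fun u : ℝ => Real.exp (-(a * |u|))) volume s]
    simp_rw [e]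
    rw [Measure.integral_comp_mul_left (fun u : ℝ => Real.exp (-|u|)) a,
      integral_exp_neg_abs, abs_of_pos (by positivity), smul_eq_mul]
    ring

lemma continuous_kern (t a : ℝ) : Continuous (fun p : ℝ × ℝ => kern t a p.1 p.2) := by
  unfold kern; fun_prop

/-- The normalised exponential kernels form an approximate identity. -/
lemma tendsto_integral_exp_kernel {ξ : ℝ → ℂ} (hξ : Continuous ξ) {t s : ℝ} (hs : s ∈ Ioo 0 t) :
    Tendsto (fun a : ℝ => ∫ s' in Ioc 0 t,
      ((a / 2 * Real.exp (-(a * |s - s'|)) : ℝ) : ℂ) * ξ s') atTop (𝓝 (ξ s)) := by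
  have hlim : Tendsto (fun x : ℝ => ‖x‖ ^ Module.finrank ℝ ℝ * (Real.exp (-|x|) / 2))
      (Bornology.cobounded ℝ) (𝓝 0) := by
    have h := (Real.tendsto_pow_mul_exp_neg_atTop_nhds_zero 1).comp
      (tendsto_norm_cobounded_atTop (E := ℝ))
    have h := h.div_const 2
    rw [zero_div] at h
    refine h.congr fun x => ?_
    simp [mul_div_assoc]
  have key := tendsto_integral_comp_smul_smul_of_integrable' (μ := (volume : Measure ℝ))
    (φ := fun x : ℝ => Real.exp (-|x|) / 2) (g := (Ioc 0 t).indicator ξ) (x₀ := s)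
    (fun x => by positivity) (by rw [integral_div, integral_exp_neg_abs]; norm_num) hlim
    ((integrable_indicator_iff measurableSet_Ioc).2
      (hξ.integrableOn_Icc.mono_set Ioc_subset_Icc_self))
    (hξ.continuousAt.congr (by
      filter_upwards [isOpen_Ioo.mem_nhds hs] with x hx
      rw [indicator_of_mem (Ioo_subset_Ioc_self hx)]))
  rw [indicator_of_mem (Ioo_subset_Ioc_self hs)] at key
  refine key.congr' ?_
  filter_upwards [eventually_gt_atTop 0] with a ha
  rw [← integral_indicator measurableSet_Ioc]
  refine integral_congr_ae (ae_of_all _ fun x => ?_)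
  simp only [indicator]
  split_ifs
  · simp only [Module.finrank_self, pow_one, smul_eq_mul, abs_mul, abs_of_pos ha,
      Complex.real_smul]
    push_cast; ring
  · simp

/-- The reflected kernel `e^{-a(2t-s-s')}` contributes nothing in the limit, since
`2t - s - s' ≥ t - s > 0`. -/
lemma tendsto_integral_reflected_kernel {ξ : ℝ → ℂ} {C : ℝ} (hC : ∀ s, ‖ξ s‖ ≤ C)
    {t s : ℝ} (hs : s ∈ Ioo 0 t) :
    Tendsto (fun a : ℝ => ∫ s' in Ioc 0 t,
      ((a / 2 * Real.exp (-(a * (2 * t - s - s'))) : ℝ) : ℂ) * ξ s') atTop (𝓝 0) := by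
  have hts : 0 < t - s := by linarith [hs.2]
  have hlim : Tendsto (fun a : ℝ => a / 2 * Real.exp (-(a * (t - s))) * C * t) atTop (𝓝 0) := by
    have h := (Real.tendsto_pow_mul_exp_neg_atTop_nhds_zero 1).comp
      (tendsto_id.atTop_mul_const hts)
    have h := h.const_mul (C * t / (2 * (t - s)))
    rw [mul_zero] at h
    refine h.congr fun a => ?_
    simp only [Function.comp, id, pow_one]
    field_simp
  refine squeeze_zero_norm' ?_ hlim
  filter_upwards [eventually_gt_atTop 0] with a ha
  have := norm_setIntegral_le_of_norm_le_const (μ := volume) (s := Ioc 0 t)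
    (f := fun s' => ((a / 2 * Real.exp (-(a * (2 * t - s - s'))) : ℝ) : ℂ) * ξ s')
    (C := a / 2 * Real.exp (-(a * (t - s))) * C) measure_Ioc_lt_top (fun s' hs' => by
      rw [norm_mul, Complex.norm_real, Real.norm_of_nonneg (by positivity)]
      have : t - s ≤ 2 * t - s - s' := by linarith [hs'.2]
      gcongr
      exact hC s')
  rwa [Real.volume_real_Ioc_of_le (hs.1.trans hs.2).le, sub_zero] at this

/-- As `a → ∞` the quadratic form of `integral_lorentz_mul` tends to `π ∫₀ᵗ |ξ|²`; the inner
integrals are dominated because the kernel is at most `2 e^{-a|s-s'|}`, of mass `4/a`. -/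
lemma tendsto_kern_integral {ξ : ℝ → ℂ} (hξ : Continuous ξ) {C : ℝ} (hC : ∀ s, ‖ξ s‖ ≤ C)
    {t : ℝ} (ht : 0 < t) :
    Tendsto (fun a : ℝ => ((a * π / 2 : ℝ) : ℂ) * ∫ s in (0 : ℝ)..t, ∫ s' in (0 : ℝ)..t,
        (starRingEnd ℂ) (ξ s) * ξ s' * (kern t a s s' : ℂ)) atTop
      (𝓝 ((π * ∫ s in (0 : ℝ)..t, ‖ξ s‖ ^ 2 : ℝ) : ℂ)) := by
  have hC0 : 0 ≤ C := (norm_nonneg _).trans (hC 0)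
  let F : ℝ → ℝ → ℂ := fun a s => ∫ s' in (0 : ℝ)..t, ((a / 2 * kern t a s s' : ℝ) : ℂ) * ξ s'
  have hFc : ∀ a, Continuous (F a) := fun a => by
    have := continuous_kern t a
    exact intervalIntegral.continuous_parametric_intervalIntegral_of_continuous'
      (by unfold Function.uncurry; fun_prop) 0 t
  have hFlim : ∀ s ∈ Ioo 0 t, Tendsto (fun a => F a s) atTop (𝓝 (ξ s)) := by
    intro s hs
    have h := (tendsto_integral_exp_kernel hξ hs).add (tendsto_integral_reflected_kernel hC hs)
    rw [add_zero] at h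
    refine h.congr fun a => ?_
    simp only [F]
    rw [intervalIntegral.integral_of_le ht.le, ← integral_add
      (Continuous.integrableOn_Ioc (by fun_prop)) (Continuous.integrableOn_Ioc (by fun_prop))]
    refine integral_congr_ae (ae_of_all _ fun x => ?_)
    simp only [kern]
    push_cast; ring
  have hFb : ∀ a, 0 < a → ∀ s ∈ Ioc 0 t, ‖F a s‖ ≤ 2 * C := by
    intro a ha s hs
    obtain ⟨hi, hv⟩ := integral_exp_neg_mul_abs_sub ha s
    simp only [F]
    rw [intervalIntegral.integral_of_le ht.le]
    calc ‖∫ s' in Ioc 0 t, ((a / 2 * kern t a s s' : ℝ) : ℂ) * ξ s'‖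
        ≤ ∫ s' in Ioc 0 t, a * C * Real.exp (-(a * |s - s'|)) := by
          refine norm_integral_le_of_norm_le (hi.const_mul _).integrableOn ?_
          refine (ae_restrict_iff' measurableSet_Ioc).2 (ae_of_all _ fun s' hs' => ?_)
          -- on `(0, t]²` the reflected distance dominates `|s - s'|`
          have hk : kern t a s s' ≤ 2 * Real.exp (-(a * |s - s'|)) := by
            have : |s - s'| ≤ 2 * t - s - s' :=
              abs_le.2 ⟨by linarith [hs.2, hs'.2], by linarith [hs.2, hs'.2]⟩
            rw [kern, two_mul (Real.exp _)]
            gcongr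
          have hk0 : 0 ≤ kern t a s s' := by unfold kern; positivity
          rw [norm_mul, Complex.norm_real, Real.norm_of_nonneg (by positivity)]
          calc a / 2 * kern t a s s' * ‖ξ s'‖
              ≤ a / 2 * (2 * Real.exp (-(a * |s - s'|))) * C := by gcongr; exact hC s'
            _ = _ := by ring
      _ ≤ ∫ s', a * C * Real.exp (-(a * |s - s'|)) :=
          setIntegral_le_integral (hi.const_mul _) (ae_of_all _ fun s' => by positivity)
      _ = 2 * C := by rw [integral_const_mul, hv]; field_simp
  have hlim : Tendsto (fun a : ℝ => ∫ s in Ioc 0 t, (starRingEnd ℂ) (ξ s) * F a s) atTop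
      (𝓝 (∫ s in Ioc 0 t, (starRingEnd ℂ) (ξ s) * ξ s)) := by
    refine tendsto_integral_filter_of_dominated_convergence (fun _ => C * (2 * C)) ?_ ?_
      (integrable_const _) ?_
    · exact Eventually.of_forall fun a =>
        ((Complex.continuous_conj.comp hξ).mul (hFc a)).aestronglyMeasurable
    · filter_upwards [eventually_gt_atTop 0] with a ha
      refine (ae_restrict_iff' measurableSet_Ioc).2 (ae_of_all _ fun s hs => ?_)
      rw [norm_mul, RCLike.norm_conj]
      gcongr
      exacts [hC s, hFb a ha s hs]
    · rw [← restrict_Ioo_eq_restrict_Ioc]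
      exact (ae_restrict_iff' measurableSet_Ioo).2
        (ae_of_all _ fun s hs => (hFlim s hs).const_mul _)
  have hlim := hlim.const_mul (π : ℂ)
  have e : (π : ℂ) * ∫ s in Ioc 0 t, (starRingEnd ℂ) (ξ s) * ξ s
      = ((π * ∫ s in (0 : ℝ)..t, ‖ξ s‖ ^ 2 : ℝ) : ℂ) := by
    rw [intervalIntegral.integral_of_le ht.le, Complex.ofReal_mul, ← integral_complex_ofReal]
    simp_rw [Complex.conj_mul', Complex.ofReal_pow]
  rw [e] at hlim
  refine hlim.congr fun a => ?_
  rw [intervalIntegral.integral_of_le ht.le, ← integral_const_mul, ← integral_const_mul]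
  refine integral_congr_ae (ae_of_all _ fun s => ?_)
  simp only [F]
  rw [← intervalIntegral.integral_const_mul, ← intervalIntegral.integral_const_mul,
    ← intervalIntegral.integral_const_mul]
  refine intervalIntegral.integral_congr fun s' _ => ?_
  push_cast; ring

/-- Plancherel's identity for the half-line cosine transform: let the scale of the Lorentzian
weight tend to infinity and use monotone convergence. -/
lemma integral_sq_cosTransform {ξ : ℝ → ℂ} (hξ : Continuous ξ) {C : ℝ} (hC : ∀ s, ‖ξ s‖ ≤ C)
    {t : ℝ} (ht : 0 < t) :
    Integrable (fun x => ‖cosTransform ξ t x‖ ^ 2) ∧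
      ∫ x, ‖cosTransform ξ t x‖ ^ 2 = π * ∫ s in (0 : ℝ)..t, ‖ξ s‖ ^ 2 := by
  set G : ℝ → ℝ := fun x => ‖cosTransform ξ t x‖ ^ 2 with hG
  have hGc : Continuous G := (continuous_cosTransform hξ t).norm.pow 2
  have hG0 : ∀ x, 0 ≤ G x := fun x => by positivity
  set V : ℝ := π * ∫ s in (0 : ℝ)..t, ‖ξ s‖ ^ 2 with hV
  have hV0 : 0 ≤ V := mul_nonneg pi_pos.le
    (intervalIntegral.integral_nonneg ht.le fun s _ => by positivity)
  have hscale : Tendsto (fun n : ℕ => (n : ℝ) + 1) atTop atTop :=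
    tendsto_atTop_add_const_right _ _ tendsto_natCast_atTop_atTop
  have hlim : Tendsto (fun n : ℕ => ∫ x, lorentz (n + 1) x * G x) atTop (𝓝 V) := by
    have h := (tendsto_kern_integral hξ hC ht).comp hscale
    have h' := (Complex.continuous_re.tendsto _).comp h
    rw [Complex.ofReal_re] at h'
    refine h'.congr fun n => ?_
    simp only [Function.comp]
    rw [← integral_lorentz_mul hξ hC ht (by positivity), Complex.ofReal_re]
  have hmono := lintegral_tendsto_of_tendsto_of_monotone (μ := volume)
    (f := fun (n : ℕ) x => ENNReal.ofReal (lorentz (n + 1) x * G x))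
    (F := fun x => ENNReal.ofReal (G x))
    (fun n => (((continuous_lorentz _).mul hGc).measurable.ennreal_ofReal).aemeasurable)
    (ae_of_all _ fun x n m hnm => by
      refine ENNReal.ofReal_le_ofReal (mul_le_mul_of_nonneg_right ?_ (hG0 x))
      unfold lorentz
      have : (n : ℝ) ≤ m := by exact_mod_cast hnm
      rw [div_pow, div_pow]
      gcongr)
    (ae_of_all _ fun x => by
      refine ENNReal.tendsto_ofReal ?_
      have h := ((tendsto_const_nhds (x := x)).div_atTop hscale).pow 2
      have h := ((h.const_add 1).inv₀ (by norm_num)).mul_const (G x)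
      simpa [lorentz] using h)
  have hval : ∫⁻ x, ENNReal.ofReal (G x) = ENNReal.ofReal V := by
    refine tendsto_nhds_unique hmono ((ENNReal.tendsto_ofReal hlim).congr fun n => ?_)
    exact ofReal_integral_eq_lintegral_ofReal (integrable_lorentz_mul hξ hC t (by positivity))
      (ae_of_all _ fun x => mul_nonneg (lorentz_nonneg _ _) (hG0 x))
  refine ⟨⟨hGc.aestronglyMeasurable, ?_⟩, ?_⟩
  · rw [hasFiniteIntegral_iff_ofReal (ae_of_all _ hG0), hval]
    exact ENNReal.ofReal_lt_top
  · rw [integral_eq_lintegral_of_nonneg_ae (ae_of_all _ hG0) hGc.aestronglyMeasurable, hval,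
      ENNReal.toReal_ofReal hV0]

/-! ### Reduction to the radial integral -/

lemma cosTransform_abs (ξ : ℝ → ℂ) (t x : ℝ) : cosTransform ξ t |x| = cosTransform ξ t x := by
  rcases abs_choice x with h | h <;> rw [h]
  simp [cosTransform]

/-- Polar coordinates in `ℝ³`: the energy integral is the one-dimensional Plancherel integral
minus its Lorentzian-weighted counterpart, as `x² / (1 + x²) = 1 - 1 / (1 + x²)`. -/
lemma energy_polar {ξ : ℝ → ℂ} (hξ : Continuous ξ) {C : ℝ} (hC : ∀ s, ‖ξ s‖ ≤ C)
    {t : ℝ} (ht : 0 < t) :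
    Integrable (fun k : EuclideanSpace ℝ (Fin 3) =>
        (1 + ‖k‖ ^ 2)⁻¹ * ‖cosTransform ξ t ‖k‖‖ ^ 2) ∧
      ∫ k : EuclideanSpace ℝ (Fin 3), (1 + ‖k‖ ^ 2)⁻¹ * ‖cosTransform ξ t ‖k‖‖ ^ 2
        = 2 * π * (π * (∫ s in (0 : ℝ)..t, ‖ξ s‖ ^ 2)
            - ∫ x, lorentz 1 x * ‖cosTransform ξ t x‖ ^ 2) := by
  obtain ⟨hi, hv⟩ := integral_sq_cosTransform hξ hC ht
  have hl := integrable_lorentz_mul hξ hC t one_pos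
  have e : ∀ x : ℝ, x ^ 2 * ((1 + x ^ 2)⁻¹ * ‖cosTransform ξ t x‖ ^ 2)
      = ‖cosTransform ξ t x‖ ^ 2 - lorentz 1 x * ‖cosTransform ξ t x‖ ^ 2 := by
    intro x
    have : (1 + x ^ 2) ≠ 0 := by positivity
    rw [lorentz, div_one]
    field_simp
    ring
  constructor
  · refine (integrable_fun_norm_addHaar volume
      (f := fun y : ℝ => (1 + y ^ 2)⁻¹ * ‖cosTransform ξ t y‖ ^ 2)).2 ?_
    simp only [finrank_euclideanSpace_fin, smul_eq_mul, Nat.reduceSub, e]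
    exact (hi.sub hl).integrableOn
  · rw [integral_fun_norm_addHaar volume
      (fun y : ℝ => (1 + y ^ 2)⁻¹ * ‖cosTransform ξ t y‖ ^ 2)]
    have h := integral_comp_abs
      (f := fun x => x ^ 2 * ((1 + x ^ 2)⁻¹ * ‖cosTransform ξ t x‖ ^ 2))
    simp only [sq_abs, cosTransform_abs] at h
    have h' : ∫ x : ℝ, x ^ 2 * ((1 + x ^ 2)⁻¹ * ‖cosTransform ξ t x‖ ^ 2)
        = π * (∫ s in (0 : ℝ)..t, ‖ξ s‖ ^ 2) - ∫ x, lorentz 1 x * ‖cosTransform ξ t x‖ ^ 2 := by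
      simp_rw [e]
      rw [integral_sub hi hl, hv]
    rw [← h', h]
    have hb : volume.real (Metric.ball (0 : EuclideanSpace ℝ (Fin 3)) 1) = π * 4 / 3 := by
      rw [Measure.real, EuclideanSpace.volume_ball_fin_three, ENNReal.ofReal_one, one_pow, one_mul,
        ENNReal.toReal_ofReal (by positivity)]
    simp only [finrank_euclideanSpace_fin, smul_eq_mul, Nat.reduceSub, hb, nsmul_eq_mul]
    push_cast
    ring

/-- The Fourier-space computation in the proof of Lemma 3.2:
`(2π)⁻³ ∫_{ℝ³} (1+|k|²)⁻¹ |∫₀ᵗ ξ(s) cos((t-s)|k|) ds|² dk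
  = (1/(4π)) ∫₀ᵗ |ξ(s)|² ds
    - (1/(8π)) ∫₀ᵗ∫₀ᵗ conj(ξ(s)) ξ(s') (e^{-|s-s'|} + e^{-(2t-s-s')}) ds ds'`. -/
theorem fourier_space_energy_identity
    (t : ℝ) (ht : 0 < t) (ξ : ℝ → ℂ) (hξ : ContinuousOn ξ (Set.Icc 0 t)) :
    MeasureTheory.Integrable
      (fun k : EuclideanSpace ℝ (Fin 3) =>
        (1 + ‖k‖ ^ 2)⁻¹ *
          ‖∫ s in (0 : ℝ)..t, ξ s * ((Real.cos ((t - s) * ‖k‖) : ℝ) : ℂ)‖ ^ 2) ∧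
    ((((2 * π) ^ 3)⁻¹ *
        ∫ k : EuclideanSpace ℝ (Fin 3),
          (1 + ‖k‖ ^ 2)⁻¹ *
            ‖∫ s in (0 : ℝ)..t, ξ s * ((Real.cos ((t - s) * ‖k‖) : ℝ) : ℂ)‖ ^ 2 : ℝ)
        : ℂ) =
      (((1 / (4 * π)) * ∫ s in (0 : ℝ)..t, ‖ξ s‖ ^ 2 : ℝ) : ℂ) -
        (((1 / (8 * π)) : ℝ) : ℂ) *
          ∫ s in (0 : ℝ)..t, ∫ s' in (0 : ℝ)..t,
            (starRingEnd ℂ) (ξ s) * ξ s' *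
              (((Real.exp (-|s - s'|) + Real.exp (-(2 * t - s - s'))) : ℝ) : ℂ) := by
  -- only the values on `[0, t]` matter, so `ξ` may be replaced by a bounded continuous extension
  obtain ⟨η, hη, hηξ, C, hC⟩ : ∃ η : ℝ → ℂ, Continuous η ∧ EqOn ξ η (Icc 0 t) ∧
      ∃ C : ℝ, ∀ s, ‖η s‖ ≤ C := by
    obtain ⟨C, hC⟩ := isCompact_Icc.exists_bound_of_continuousOn hξ
    exact ⟨IccExtend ht.le ((Icc 0 t).domRestrict ξ), hξ.domRestrict.Icc_extend',
      fun s hs => (IccExtend_of_mem ht.le ((Icc 0 t).domRestrict ξ) hs).symm, C,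
      fun s => hC _ (projIcc 0 t ht.le s).2⟩
  have hu : uIcc 0 t = Icc 0 t := uIcc_of_le ht.le
  have h1 : ∀ x : ℝ, ∫ s in (0 : ℝ)..t, ξ s * ((Real.cos ((t - s) * x) : ℝ) : ℂ)
      = cosTransform η t x := fun x =>
    intervalIntegral.integral_congr fun s hs => by
      simp only [hηξ (hu ▸ hs)]
  have h2 : ∫ s in (0 : ℝ)..t, ‖ξ s‖ ^ 2 = ∫ s in (0 : ℝ)..t, ‖η s‖ ^ 2 :=
    intervalIntegral.integral_congr fun s hs => by simp only [hηξ (hu ▸ hs)]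
  have h3 : ∫ s in (0 : ℝ)..t, ∫ s' in (0 : ℝ)..t, (starRingEnd ℂ) (ξ s) * ξ s' *
        (((Real.exp (-|s - s'|) + Real.exp (-(2 * t - s - s'))) : ℝ) : ℂ)
      = ∫ s in (0 : ℝ)..t, ∫ s' in (0 : ℝ)..t,
        (starRingEnd ℂ) (η s) * η s' * (kern t 1 s s' : ℂ) :=
    intervalIntegral.integral_congr fun s hs =>
      intervalIntegral.integral_congr fun s' hs' => by
        simp only [hηξ (hu ▸ hs), hηξ (hu ▸ hs'), kern, one_mul]
  obtain ⟨hint, hval⟩ := energy_polar hη hC ht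
  have hL := integral_lorentz_mul hη hC ht one_pos
  simp only [h1, h2, h3]
  refine ⟨hint, ?_⟩
  rw [hval]
  have hpi : (π : ℂ) ≠ 0 := Complex.ofReal_ne_zero.2 pi_ne_zero
  rw [Complex.ofReal_mul, Complex.ofReal_mul (2 * π), Complex.ofReal_sub, hL]
  push_cast
  field_simp
  ring
end

section
/- Let ζ, ζ' ∈ ℝ and y ∈ ℝ³. Define φ : ℝ × (ℝ³ \ {y}) → ℝ by φ(t,x) = sgn(t) ζ'/(4π) if |x − y| < |t|, and φ(t,x) = (ζ + t ζ')/(4π|x − y|) if |x − y| ≥ |t|. Then: (i) for every x ≠ y, φ(0,x) = ζ/(4π|x − y|) and the map t ↦ φ(t,x) is differentiable at 0 with derivative ζ'/(4π|x − y|); (ii) φ satisfies the wave equation ∂²φ/∂t² = Δ_x φ pointwise at every (t,x) with x ≠ y and |x − y| ≠ |t|; (iii) for every t ≠ 0, lim_{x → y} φ(t,x) = sgn(t) ζ'/(4π). -/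
open Set Real Filter Topology

/-!
Inside the light cone `φ` is constant, and outside it `φ` is affine in `t` and a multiple of
`1 / ‖x - y‖` in `x`; both regions are open. Hence both sides of the wave equation vanish:
the time derivative because `φ` is locally affine in `t`, the Laplacian because `1 / ‖x - y‖` is
harmonic in dimension three. For the latter, with `r = ‖z‖`, the second derivative of `1 / ‖z‖`
in the `i`-th coordinate direction is `3 zᵢ² / r⁵ - 1 / r³`
(`iteratedDeriv_two_div_norm`), and these sum to `3 r² / r⁵ - 3 / r³ = 0`.
The initial data are read off outside the cone, which near `t = 0` contains every `x ≠ y`, and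
the limit at the source is read off inside the cone.
-/

lemma norm_add_smul_single_sq (z : EuclideanSpace ℝ (Fin 3)) (i : Fin 3) (h : ℝ) :
    ‖z + h • EuclideanSpace.single i (1 : ℝ)‖ ^ 2 = ‖z‖ ^ 2 + 2 * z i * h + h ^ 2 := by
  rw [norm_add_sq_real, inner_smul_right, norm_smul]
  simp [EuclideanSpace.inner_single_right]
  ring

/-- Along the `i`-th coordinate direction, `‖z‖` has derivative `zᵢ / ‖z‖`. -/
lemma hasDerivAt_norm_add_smul_single (z : EuclideanSpace ℝ (Fin 3)) (i : Fin 3) (h : ℝ)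
    (hz : z + h • EuclideanSpace.single i (1 : ℝ) ≠ 0) :
    HasDerivAt (fun h : ℝ => ‖z + h • EuclideanSpace.single i (1 : ℝ)‖)
      ((z i + h) / ‖z + h • EuclideanSpace.single i (1 : ℝ)‖) h := by
  have hN : ∀ s : ℝ, ‖z + s • EuclideanSpace.single i (1 : ℝ)‖
      = √(‖z‖ ^ 2 + 2 * z i * s + s ^ 2) := fun s => by
    rw [← norm_add_smul_single_sq, Real.sqrt_sq (norm_nonneg _)]
  have hq : ‖z‖ ^ 2 + 2 * z i * h + h ^ 2 ≠ 0 := by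
    rw [← norm_add_smul_single_sq]
    exact pow_ne_zero 2 (norm_ne_zero_iff.mpr hz)
  have h1 : HasDerivAt (fun s : ℝ => ‖z‖ ^ 2 + 2 * z i * s + s ^ 2) (2 * z i + 2 * h) h := by
    refine ((((hasDerivAt_id' h).const_mul (2 * z i)).const_add (‖z‖ ^ 2)).fun_add
      ((hasDerivAt_id' h).fun_pow 2)).congr_deriv ?_
    simp
  simp only [hN]
  refine (h1.sqrt hq).congr_deriv ?_
  rw [← mul_add, mul_div_mul_left _ _ two_ne_zero]

lemma iteratedDeriv_two_div_norm (c : ℝ) (z : EuclideanSpace ℝ (Fin 3)) (hz : z ≠ 0)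
    (i : Fin 3) :
    iteratedDeriv 2 (fun h : ℝ => c / ‖z + h • EuclideanSpace.single i (1 : ℝ)‖) 0
      = c * (3 * z i ^ 2 / ‖z‖ ^ 5 - 1 / ‖z‖ ^ 3) := by
  set N : ℝ → ℝ := fun h => ‖z + h • EuclideanSpace.single i (1 : ℝ)‖ with hNdef
  have hN0 : N 0 = ‖z‖ := by simp [hNdef]
  have hr : ‖z‖ ≠ 0 := norm_ne_zero_iff.mpr hz
  have hcont : Continuous N := by fun_prop
  have hev : ∀ᶠ h in 𝓝 (0 : ℝ), N h ≠ 0 :=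
    hcont.continuousAt.eventually_ne (by rwa [hN0])
  have hN : ∀ h, N h ≠ 0 → HasDerivAt N ((z i + h) / N h) h := fun h hh =>
    hasDerivAt_norm_add_smul_single z i h (norm_ne_zero_iff.mp hh)
  have h1 : deriv (fun h => c / N h) =ᶠ[𝓝 0] fun h => -(c * (z i + h)) / N h ^ 3 := by
    filter_upwards [hev] with h hh
    rw [((hasDerivAt_const h c).fun_div (hN h hh) hh).deriv]
    field_simp
    ring
  have h2 : HasDerivAt (fun h => -(c * (z i + h)) / N h ^ 3)
      (c * (3 * z i ^ 2 / ‖z‖ ^ 5 - 1 / ‖z‖ ^ 3)) 0 := by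
    have hne : N 0 ≠ 0 := by rwa [hN0]
    refine (((((hasDerivAt_id' (0 : ℝ)).const_add (z i)).const_mul c).fun_neg).fun_div
      ((hN 0 hne).fun_pow 3) (pow_ne_zero 3 hne)).congr_deriv ?_
    rw [hN0]
    field_simp
    push_cast
    ring
  rw [iteratedDeriv_succ, iteratedDeriv_one, h1.deriv_eq, h2.deriv]

/-- The function `z ↦ c / ‖z‖` is harmonic away from the origin of `ℝ³`. -/
lemma sum_iteratedDeriv_two_div_norm (c : ℝ) (z : EuclideanSpace ℝ (Fin 3)) (hz : z ≠ 0) :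
    ∑ i : Fin 3,
      iteratedDeriv 2 (fun h : ℝ => c / ‖z + h • EuclideanSpace.single i (1 : ℝ)‖) 0 = 0 := by
  have hr : ‖z‖ ≠ 0 := norm_ne_zero_iff.mpr hz
  have hs : ‖z‖ ^ 2 = z 0 ^ 2 + z 1 ^ 2 + z 2 ^ 2 := by
    simp [EuclideanSpace.norm_sq_eq, Fin.sum_univ_three]
  simp only [iteratedDeriv_two_div_norm c z hz, Fin.sum_univ_three]
  field_simp
  rw [hs]
  ring

lemma iteratedDeriv_two_affine (a b t : ℝ) :
    iteratedDeriv 2 (fun τ : ℝ => a + τ * b) t = 0 := by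
  have h1 : deriv (fun τ : ℝ => a + τ * b) = fun _ => b := by
    funext s
    simp
  rw [iteratedDeriv_succ, iteratedDeriv_one, h1, deriv_const]

/-- The sign function is locally constant away from `0`. -/
lemma eventually_sign_eq {t : ℝ} (ht : t ≠ 0) : ∀ᶠ τ in 𝓝 t, Real.sign τ = Real.sign t := by
  rcases lt_or_gt_of_ne ht with h | h
  · filter_upwards [gt_mem_nhds h] with τ hτ
    rw [Real.sign_of_neg hτ, Real.sign_of_neg h]
  · filter_upwards [lt_mem_nhds h] with τ hτ
    rw [Real.sign_of_pos hτ, Real.sign_of_pos h]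

/-- Lemma 3.3: the solution of the free wave equation with initial data
`ζ G_y`, `ζ' G_y`, where `G_y(x) = 1/(4π|x - y|)`, is given by
`φ(t,x) = sgn(t) ζ'/(4π)` inside the light cone `|x - y| < |t|` and
`φ(t,x) = (ζ + tζ')/(4π|x - y|)` outside; it attains the prescribed initial
data, solves the wave equation away from the cone boundary and the source,
and has regular value `sgn(t) ζ'/(4π)` at the source point. -/
theorem free_wave_with_G_data
    (ζ ζ' : ℝ) (y : EuclideanSpace ℝ (Fin 3))
    (φ : ℝ → EuclideanSpace ℝ (Fin 3) → ℝ)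
    (hφ : ∀ t : ℝ, ∀ x : EuclideanSpace ℝ (Fin 3),
      φ t x = if ‖x - y‖ < |t| then Real.sign t * ζ' / (4 * π)
              else (ζ + t * ζ') / (4 * π * ‖x - y‖)) :
    (∀ x : EuclideanSpace ℝ (Fin 3), x ≠ y →
      φ 0 x = ζ / (4 * π * ‖x - y‖) ∧
      HasDerivAt (fun t => φ t x) (ζ' / (4 * π * ‖x - y‖)) 0) ∧
    (∀ t : ℝ, ∀ x : EuclideanSpace ℝ (Fin 3), x ≠ y → ‖x - y‖ ≠ |t| →
      iteratedDeriv 2 (fun τ => φ τ x) t =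
        ∑ i : Fin 3,
          iteratedDeriv 2
            (fun h : ℝ => φ t (x + h • EuclideanSpace.single i (1 : ℝ))) 0) ∧
    (∀ t : ℝ, t ≠ 0 →
      Tendsto (fun x => φ t x) (nhdsWithin y {y}ᶜ)
        (nhds (Real.sign t * ζ' / (4 * π)))) := by
  -- Outside the cone, in the affine form used for the time derivatives.
  have hout : ∀ (t : ℝ) (x : EuclideanSpace ℝ (Fin 3)), |t| < ‖x - y‖ →
      φ t x = ζ / (4 * π * ‖x - y‖) + t * (ζ' / (4 * π * ‖x - y‖)) := fun t x h => by
    rw [hφ, if_neg h.le.not_gt]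
    ring
  have hpos : ∀ x : EuclideanSpace ℝ (Fin 3), x ≠ y → 0 < ‖x - y‖ := fun x hx =>
    norm_pos_iff.mpr (sub_ne_zero.mpr hx)
  have houtev : ∀ (t : ℝ) (x : EuclideanSpace ℝ (Fin 3)), |t| < ‖x - y‖ →
      (fun τ => φ τ x) =ᶠ[𝓝 t]
        fun τ => ζ / (4 * π * ‖x - y‖) + τ * (ζ' / (4 * π * ‖x - y‖)) := fun t x h => by
    filter_upwards [continuous_abs.continuousAt.eventually_lt_const h] with τ hτ
    exact hout τ x hτ
  refine ⟨fun x hx => ⟨?_, ?_⟩, fun t x hx hne => ?_, fun t ht => ?_⟩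
  · rw [hout 0 x (by simpa using hpos x hx)]
    simp
  · refine HasDerivAt.congr_of_eventuallyEq ?_ (houtev 0 x (by simpa using hpos x hx))
    simpa using ((hasDerivAt_id (0 : ℝ)).mul_const (ζ' / (4 * π * ‖x - y‖))).const_add
      (ζ / (4 * π * ‖x - y‖))
  · have hcont : ∀ i : Fin 3, Continuous
        (fun h : ℝ => ‖x + h • EuclideanSpace.single i (1 : ℝ) - y‖) := fun i => by fun_prop
    rcases lt_or_gt_of_ne hne with hlt | hgt
    · have ht : t ≠ 0 := abs_pos.mp ((norm_nonneg _).trans_lt hlt)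
      have hT : (fun τ => φ τ x) =ᶠ[𝓝 t] fun _ => Real.sign t * ζ' / (4 * π) := by
        filter_upwards [continuous_abs.continuousAt.eventually_const_lt hlt,
          eventually_sign_eq ht] with τ hτ hs
        rw [hφ, if_pos hτ, hs]
      have hX : ∀ i : Fin 3, (fun h : ℝ => φ t (x + h • EuclideanSpace.single i (1 : ℝ)))
          =ᶠ[𝓝 0] fun _ => Real.sign t * ζ' / (4 * π) := fun i => by
        filter_upwards [(hcont i).continuousAt.eventually_lt_const
          (show _ < |t| by simpa using hlt)] with h hh
        rw [hφ, if_pos hh]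
      rw [hT.iteratedDeriv_eq, Finset.sum_congr rfl fun i _ => (hX i).iteratedDeriv_eq 2]
      simp [iteratedDeriv_const]
    · have hX : ∀ i : Fin 3, (fun h : ℝ => φ t (x + h • EuclideanSpace.single i (1 : ℝ)))
          =ᶠ[𝓝 0] fun h => ((ζ + t * ζ') / (4 * π)) /
            ‖(x - y) + h • EuclideanSpace.single i (1 : ℝ)‖ := fun i => by
        filter_upwards [(hcont i).continuousAt.eventually_const_lt
          (show |t| < _ by simpa using hgt)] with h hh
        rw [hφ, if_neg hh.le.not_gt, add_sub_right_comm, div_div]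
      rw [(houtev t x hgt).iteratedDeriv_eq, iteratedDeriv_two_affine,
        Finset.sum_congr rfl fun i _ => (hX i).iteratedDeriv_eq 2,
        sum_iteratedDeriv_two_div_norm _ _ (sub_ne_zero.mpr hx)]
  · refine tendsto_const_nhds.congr' (EventuallyEq.filter_mono ?_ nhdsWithin_le_nhds)
    have hc : Continuous fun x : EuclideanSpace ℝ (Fin 3) => ‖x - y‖ := by fun_prop
    filter_upwards [hc.continuousAt.eventually_lt_const
      (show ‖y - y‖ < |t| by simpa using ht)] with x hx
    rw [hφ, if_pos hx]
end

section
/- For every c > 0 and all y₁, y₂ ∈ ℝ³ with y₁ ≠ y₂, ∫_{ℝ³} e^{−c|x − y₁|} / (16π² |x − y₁| |x − y₂|) dx = (1 − e^{−c|y₁ − y₂|}) / (4π c² |y₁ − y₂|), where |·| is the Euclidean norm on ℝ³. -/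
open Set MeasureTheory Real

/-!
After a translation the first pole is the origin; let `y` be the second one and `a = ‖y‖`.
The integrand depends only on `‖x‖` and `‖x - y‖`, so in spherical coordinates with axis `y`
(`lintegral_norm_norm_sub`) the integral is
`2π ∫ r, ∫ θ, r² sin θ · e^{-cr} / (16π² r √(r² + a² - 2 r a cos θ))`.
By the law of cosines the antiderivative in `θ` is the distance to `y`, up to the factor `r a`, and
so the angular integral is `(r + a - |r - a|) / (r a) = 2 min r a / (r a)`
(`lintegral_sin_div`). What remains is
`∫ r, e^{-cr} min r a = (1 - e^{-ca}) / c²` (`lintegral_exp_mul_min`).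

Since the integrand is nonnegative, all of this is carried out with the Lebesgue integral of
`ℝ≥0∞`-valued functions, where Tonelli's theorem and the polar changes of variables need no
integrability; finiteness comes out of the computation.
-/

open scoped ENNReal

/-- Volume-preserving Cartesian coordinates on Euclidean space whose first axis points along `y`. -/
lemma exists_coords (y : EuclideanSpace ℝ (Fin 3)) (hy : y ≠ 0) :
    ∃ φ : ℝ × ℝ × ℝ → EuclideanSpace ℝ (Fin 3), MeasurePreserving φ ∧
      (∀ p, ‖φ p‖ ^ 2 = p.1 ^ 2 + (p.2.1 ^ 2 + p.2.2 ^ 2)) ∧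
      (∀ p, ‖φ p - y‖ ^ 2 = (p.1 - ‖y‖) ^ 2 + (p.2.1 ^ 2 + p.2.2 ^ 2)) := by
  have hn : ‖y‖ ≠ 0 := norm_ne_zero_iff.2 hy
  obtain ⟨b, hb⟩ : ∃ b : OrthonormalBasis (Fin 3) ℝ (EuclideanSpace ℝ (Fin 3)),
      ∀ i ∈ ({0} : Set (Fin 3)), b i = (fun _ => (‖y‖)⁻¹ • y) i := by
    refine Orthonormal.exists_orthonormalBasis_extension_of_card_eq (by simp) ?_
    refine ⟨fun i => ?_, fun i j hij => ?_⟩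
    · simp [norm_smul, hn]
    · exact (hij (Subsingleton.elim _ _)).elim
  have hb0 : b 0 = (‖y‖)⁻¹ • y := hb 0 rfl
  have hy' : y = b.repr.symm (‖y‖ • EuclideanSpace.single 0 1) := by
    rw [map_smul, b.repr_symm_single, hb0, smul_smul, mul_inv_cancel₀ hn, one_smul]
  let e : (Fin 3 → ℝ) ≃ᵐ ℝ × ℝ × ℝ := (MeasurableEquiv.piFinSuccAbove (fun _ => ℝ) 0).trans
    ((MeasurableEquiv.refl ℝ).prodCongr MeasurableEquiv.finTwoArrow)
  have he : MeasurePreserving e := by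
    refine MeasurePreserving.trans (volume_preserving_piFinSuccAbove (fun _ : Fin 3 => ℝ) 0) ?_
    exact (MeasurePreserving.id volume).prod (volume_preserving_finTwoArrow ℝ)
  have hes : ∀ p, e.symm p = ![p.1, p.2.1, p.2.2] := by
    intro p
    rw [MeasurableEquiv.symm_apply_eq]
    rfl
  refine ⟨fun p => b.repr.symm (WithLp.toLp 2 (e.symm p)),
    b.measurePreserving_repr_symm.comp ((PiLp.volume_preserving_toLp (Fin 3)).comp he.symm),
    fun p => ?_, fun p => ?_⟩
  · rw [LinearIsometryEquiv.norm_map, hes, EuclideanSpace.norm_sq_eq, Fin.sum_univ_three]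
    simp [add_assoc]
  · conv_lhs => rw [hy']
    rw [← map_sub, LinearIsometryEquiv.norm_map, hes, EuclideanSpace.norm_sq_eq,
      Fin.sum_univ_three]
    simp [add_assoc]

lemma lintegral_plane_radial (h : ℝ → ℝ≥0∞) (hh : Measurable h) :
    ∫⁻ q : ℝ × ℝ, h (q.1 ^ 2 + q.2 ^ 2) =
      ENNReal.ofReal (2 * π) * ∫⁻ ρ in Ioi (0 : ℝ), ENNReal.ofReal ρ * h (ρ ^ 2) := by
  rw [← lintegral_comp_polarCoord_symm]
  have : ∀ p : ℝ × ℝ, ENNReal.ofReal p.1 • h ((polarCoord.symm p).1 ^ 2 + (polarCoord.symm p).2 ^ 2)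
      = ENNReal.ofReal p.1 * h (p.1 ^ 2) := by
    intro p
    rw [polarCoord_symm_apply, smul_eq_mul]
    congr 2
    linear_combination p.1 ^ 2 * Real.sin_sq_add_cos_sq p.2
  simp_rw [this]
  rw [polarCoord_target, Measure.volume_eq_prod, ← Measure.prod_restrict,
    lintegral_prod _ (by fun_prop)]
  simp only [lintegral_const, Measure.restrict_apply_univ, Real.volume_Ioo]
  rw [lintegral_mul_const _ (by fun_prop), mul_comm]
  congr 2
  ring

/-- Polar coordinates in the upper half-plane `ρ > 0`, with the angle running over `(0, π)`.
Together with polar coordinates in the plane orthogonal to the axis they give spherical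
coordinates. -/
lemma lintegral_halfPlane (H : ℝ × ℝ → ℝ≥0∞) (hH : Measurable H) :
    ∫⁻ z : ℝ, ∫⁻ ρ in Ioi (0 : ℝ), H (z, ρ) =
      ∫⁻ r in Ioi (0 : ℝ), ∫⁻ θ in Ioo 0 π,
        ENNReal.ofReal r * H (r * Real.cos θ, r * Real.sin θ) := by
  have hm : MeasurableSet {q : ℝ × ℝ | 0 < q.2} := measurableSet_lt measurable_const measurable_snd
  have h1 : ∫⁻ z : ℝ, ∫⁻ ρ in Ioi (0 : ℝ), H (z, ρ) =
      ∫⁻ q : ℝ × ℝ, {q : ℝ × ℝ | 0 < q.2}.indicator H q := by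
    rw [Measure.volume_eq_prod, lintegral_prod _ (hH.indicator hm).aemeasurable]
    refine lintegral_congr fun z => ?_
    rw [← lintegral_indicator measurableSet_Ioi]
    rfl
  rw [h1, ← lintegral_comp_polarCoord_symm, polarCoord_target, Measure.volume_eq_prod,
    ← Measure.prod_restrict, lintegral_prod]
  · refine setLIntegral_congr_fun measurableSet_Ioi fun r (hr : 0 < r) => ?_
    have h2 : Ioo (0 : ℝ) π = Ioi 0 ∩ Ioo (-π) π := by
      ext t; simp only [mem_Ioo, mem_inter_iff, mem_Ioi]
      constructor
      · rintro ⟨h, h'⟩; exact ⟨h, by linarith, h'⟩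
      · rintro ⟨h, _, h'⟩; exact ⟨h, h'⟩
    simp only
    rw [h2, ← Measure.restrict_restrict measurableSet_Ioi, ← lintegral_indicator measurableSet_Ioi]
    refine setLIntegral_congr_fun measurableSet_Ioo fun t ht => ?_
    simp only [polarCoord_symm_apply, smul_eq_mul, indicator_apply, mem_ofPred_eq, mem_Ioi]
    by_cases h0 : 0 < t
    · rw [if_pos h0, if_pos (mul_pos hr (Real.sin_pos_of_pos_of_lt_pi h0 ht.2))]
    · rw [if_neg h0, if_neg, mul_zero]
      have := Real.sin_nonpos_of_nonpos_of_neg_pi_le (not_lt.1 h0) ht.1.le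
      nlinarith
  · refine Measurable.aemeasurable ?_
    have := (hH.indicator hm).comp continuous_polarCoord_symm.measurable
    simp only [smul_eq_mul]
    exact (by fun_prop : Measurable fun p : ℝ × ℝ => ENNReal.ofReal p.1).mul this

/-- Spherical coordinates with axis `y`, for a function of the distances to `0` and to `y`.
The function takes the squared distances, which are polynomial in the coordinates. -/
lemma lintegral_norm_norm_sub (F : ℝ × ℝ → ℝ≥0∞) (hF : Measurable F)
    (y : EuclideanSpace ℝ (Fin 3)) (hy : y ≠ 0) :
    ∫⁻ x : EuclideanSpace ℝ (Fin 3), F (‖x‖ ^ 2, ‖x - y‖ ^ 2) =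
      ENNReal.ofReal (2 * π) * ∫⁻ r in Ioi (0 : ℝ), ∫⁻ θ in Ioo 0 π,
        ENNReal.ofReal r * (ENNReal.ofReal (r * Real.sin θ) *
          F (r ^ 2, r ^ 2 + ‖y‖ ^ 2 - 2 * r * ‖y‖ * Real.cos θ)) := by
  obtain ⟨φ, hφ, h1, h2⟩ := exists_coords y hy
  rw [← hφ.lintegral_comp (by fun_prop)]
  simp_rw [h1, h2]
  rw [Measure.volume_eq_prod, lintegral_prod _ (by fun_prop)]
  have h3 : ∀ z : ℝ, ∫⁻ q : ℝ × ℝ, F (z ^ 2 + (q.1 ^ 2 + q.2 ^ 2),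
      (z - ‖y‖) ^ 2 + (q.1 ^ 2 + q.2 ^ 2)) =
      ENNReal.ofReal (2 * π) * ∫⁻ ρ in Ioi (0 : ℝ), ENNReal.ofReal ρ *
        F (z ^ 2 + ρ ^ 2, (z - ‖y‖) ^ 2 + ρ ^ 2) := fun z =>
    lintegral_plane_radial (fun s => F (z ^ 2 + s, (z - ‖y‖) ^ 2 + s)) (by fun_prop)
  simp_rw [h3]
  rw [lintegral_const_mul' _ _ ENNReal.ofReal_ne_top, lintegral_halfPlane (fun q : ℝ × ℝ =>
    ENNReal.ofReal q.2 * F (q.1 ^ 2 + q.2 ^ 2, (q.1 - ‖y‖) ^ 2 + q.2 ^ 2)) (by fun_prop)]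
  congr 1
  refine lintegral_congr fun r => lintegral_congr fun θ => ?_
  congr 4
  · linear_combination r ^ 2 * Real.sin_sq_add_cos_sq θ
  · linear_combination r ^ 2 * Real.sin_sq_add_cos_sq θ

/-- Twice the average of `‖x - y‖⁻¹` over the sphere `‖x‖ = r`, where `a = ‖y‖`: the integrand is the derivative of
`√(r² + a² - 2 r a cos θ) / (r a)`. For `r = a` the square root vanishes at `θ = 0`; this single
radius is a null set and is excluded. -/
lemma lintegral_sin_div (r a : ℝ) (hr : 0 < r) (ha : 0 < a) (hra : r ≠ a) :
    ∫⁻ θ in Ioo 0 π, ENNReal.ofReal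
      (Real.sin θ / √(r ^ 2 + a ^ 2 - 2 * r * a * Real.cos θ)) =
      ENNReal.ofReal (2 * min r a / (r * a)) := by
  have hpos : ∀ θ, 0 < r ^ 2 + a ^ 2 - 2 * r * a * Real.cos θ := by
    intro θ
    have := Real.cos_le_one θ
    have h1 : 0 < (r - a) ^ 2 := by positivity [sub_ne_zero.2 hra]
    nlinarith [mul_pos hr ha]
  have hd : ∀ θ ∈ uIcc 0 π, HasDerivAt
      (fun θ => √(r ^ 2 + a ^ 2 - 2 * r * a * Real.cos θ) / (r * a))
      (Real.sin θ / √(r ^ 2 + a ^ 2 - 2 * r * a * Real.cos θ)) θ := by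
    intro θ _
    have := ((((Real.hasDerivAt_cos θ).const_mul (2 * r * a)).const_sub
      (r ^ 2 + a ^ 2)).sqrt (hpos θ).ne').div_const (r * a)
    refine this.congr_deriv ?_
    have := (Real.sqrt_pos.2 (hpos θ)).ne'
    field_simp
  have hc : Continuous fun θ => Real.sin θ / √(r ^ 2 + a ^ 2 - 2 * r * a * Real.cos θ) :=
    Real.continuous_sin.div (by fun_prop) fun θ => (Real.sqrt_pos.2 (hpos θ)).ne'
  have hI := intervalIntegral.integral_eq_sub_of_hasDerivAt hd (hc.intervalIntegrable _ _)
  rw [intervalIntegral.integral_of_le pi_pos.le, integral_Ioc_eq_integral_Ioo] at hI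
  rw [← ofReal_integral_eq_lintegral_ofReal
    ((hc.integrableOn_Icc (a := 0) (b := π)).mono_set Ioo_subset_Icc_self), hI]
  · congr 1
    have e1 : r ^ 2 + a ^ 2 - 2 * r * a * Real.cos π = (r + a) ^ 2 := by simp; ring
    have e2 : r ^ 2 + a ^ 2 - 2 * r * a * Real.cos 0 = (r - a) ^ 2 := by simp; ring
    rw [e1, e2, Real.sqrt_sq (by positivity), Real.sqrt_sq_eq_abs, ← sub_div]
    congr 1
    rcases le_total r a with h | h
    · rw [min_eq_left h, abs_of_nonpos (by linarith)]; ring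
    · rw [min_eq_right h, abs_of_nonneg (by linarith)]; ring
  · refine (ae_restrict_iff' measurableSet_Ioo).2 (ae_of_all _ fun θ hθ => ?_)
    exact div_nonneg (Real.sin_pos_of_mem_Ioo hθ).le (Real.sqrt_nonneg _)

lemma lintegral_exp_mul_min (c a : ℝ) (hc : 0 < c) (ha : 0 < a) :
    ∫⁻ r in Ioi (0 : ℝ), ENNReal.ofReal (Real.exp (-c * r) * min r a) =
      ENNReal.ofReal ((1 - Real.exp (-c * a)) / c ^ 2) := by
  have hexp : ∀ r, HasDerivAt (fun r => Real.exp (-c * r)) (Real.exp (-c * r) * -c) r := by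
    intro r
    simpa using! ((hasDerivAt_id r).const_mul (-c)).exp
  have h1 : ∫⁻ r in Ioc (0 : ℝ) a, ENNReal.ofReal (Real.exp (-c * r) * min r a) =
      ENNReal.ofReal ((1 - Real.exp (-c * a)) / c ^ 2 - a * Real.exp (-c * a) / c) := by
    have hcont : Continuous fun r => Real.exp (-c * r) * r := by fun_prop
    have hI := intervalIntegral.integral_eq_sub_of_hasDerivAt (a := 0) (b := a)
      (f := fun r => -(Real.exp (-c * r) * (r / c + 1 / c ^ 2)))
      (f' := fun r => Real.exp (-c * r) * r) (fun r _ => by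
        have := ((hexp r).mul (((hasDerivAt_id r).div_const c).add_const (1 / c ^ 2))).neg
        refine this.congr_deriv ?_
        simp only [id]
        field_simp
        ring) (hcont.intervalIntegrable _ _)
    rw [intervalIntegral.integral_of_le ha.le] at hI
    have hcg : ∫⁻ r in Ioc (0 : ℝ) a, ENNReal.ofReal (Real.exp (-c * r) * min r a) =
        ∫⁻ r in Ioc (0 : ℝ) a, ENNReal.ofReal (Real.exp (-c * r) * r) :=
      setLIntegral_congr_fun measurableSet_Ioc fun r hr => by simp only [min_eq_left hr.2]
    rw [hcg, ← ofReal_integral_eq_lintegral_ofReal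
      ((hcont.integrableOn_Icc (a := 0) (b := a)).mono_set Ioc_subset_Icc_self), hI]
    · congr 1
      simp
      field_simp
      ring
    · refine (ae_restrict_iff' measurableSet_Ioc).2 (ae_of_all _ fun r hr => ?_)
      exact mul_nonneg (Real.exp_pos _).le hr.1.le
  have h2 : ∫⁻ r in Ioi a, ENNReal.ofReal (Real.exp (-c * r) * min r a) =
      ENNReal.ofReal (a * Real.exp (-c * a) / c) := by
    have hcg : ∫⁻ r in Ioi a, ENNReal.ofReal (Real.exp (-c * r) * min r a) =
        ∫⁻ r in Ioi a, ENNReal.ofReal (Real.exp (-c * r) * a) :=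
      setLIntegral_congr_fun measurableSet_Ioi fun r (hr : a < r) => by
        simp only [min_eq_right hr.le]
    rw [hcg, ← ofReal_integral_eq_lintegral_ofReal
      ((integrableOn_exp_mul_Ioi (neg_lt_zero.2 hc) a).mul_const a)
      (ae_of_all _ fun r => mul_nonneg (Real.exp_pos _).le ha.le), integral_mul_const,
      integral_exp_mul_Ioi (neg_lt_zero.2 hc)]
    congr 1
    field_simp
  rw [← Ioc_union_Ioi_eq_Ioi ha.le, lintegral_union measurableSet_Ioi Ioc_disjoint_Ioi_same,
    h1, h2, ← ENNReal.ofReal_add]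
  · congr 1; ring
  · have := Real.add_one_le_exp (c * a)
    have h3 : Real.exp (-c * a) * Real.exp (c * a) = 1 := by
      rw [← Real.exp_add]; simp
    have h4 := Real.exp_pos (-c * a)
    rw [sub_nonneg, div_le_div_iff₀ hc (by positivity)]
    nlinarith [mul_le_mul_of_nonneg_left this h4.le]
  · positivity

theorem green_function_offdiagonal_integral
    (c : ℝ) (hc : 0 < c) (y₁ y₂ : EuclideanSpace ℝ (Fin 3)) (hy : y₁ ≠ y₂) :
    ∫ x : EuclideanSpace ℝ (Fin 3),
        Real.exp (-c * ‖x - y₁‖) / (16 * π ^ 2 * ‖x - y₁‖ * ‖x - y₂‖) =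
      (1 - Real.exp (-c * ‖y₁ - y₂‖)) / (4 * π * c ^ 2 * ‖y₁ - y₂‖) := by
  have hy0 : y₂ - y₁ ≠ 0 := sub_ne_zero.2 hy.symm
  rw [norm_sub_rev y₁ y₂]
  have hsh : ∀ x, x - y₂ = (x - y₁) - (y₂ - y₁) := fun x => by abel
  simp_rw [hsh]
  generalize y₂ - y₁ = y at hy0
  have ha : 0 < ‖y‖ := norm_pos_iff.2 hy0
  rw [integral_sub_right_eq_self (fun x : EuclideanSpace ℝ (Fin 3) =>
    Real.exp (-c * ‖x‖) / (16 * π ^ 2 * ‖x‖ * ‖x - y‖)) y₁]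
  rw [integral_eq_lintegral_of_nonneg_ae (ae_of_all _ fun x => by positivity)
    (Measurable.aestronglyMeasurable (by fun_prop))]
  have hE : Real.exp (-c * ‖y‖) ≤ 1 := Real.exp_le_one_iff.2 (by nlinarith)
  rw [← ENNReal.toReal_ofReal (r := (1 - Real.exp (-c * ‖y‖)) / (4 * π * c ^ 2 * ‖y‖))
    (div_nonneg (by linarith) (by positivity))]
  congr 1
  have hF := lintegral_norm_norm_sub (fun p => ENNReal.ofReal
    (Real.exp (-c * √p.1) / (16 * π ^ 2 * √p.1 * √p.2))) (by fun_prop) y hy0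
  simp only [Real.sqrt_sq (norm_nonneg _)] at hF
  rw [hF]
  set a := ‖y‖
  have hr : ∫⁻ r in Ioi (0 : ℝ), ∫⁻ θ in Ioo 0 π,
        ENNReal.ofReal r * (ENNReal.ofReal (r * Real.sin θ) * ENNReal.ofReal
          (Real.exp (-c * √(r ^ 2)) / (16 * π ^ 2 * √(r ^ 2) *
            √(r ^ 2 + a ^ 2 - 2 * r * a * Real.cos θ)))) =
      ∫⁻ r in Ioi (0 : ℝ), ENNReal.ofReal (1 / (8 * π ^ 2 * a)) *
        ENNReal.ofReal (Real.exp (-c * r) * min r a) := by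
    refine lintegral_congr_ae ?_
    -- the sphere through `y` is negligible
    have hne : ∀ᵐ r ∂(volume.restrict (Ioi (0 : ℝ))), r ≠ a :=
      ae_restrict_of_ae (Measure.ae_ne volume a)
    filter_upwards [hne, ae_restrict_mem measurableSet_Ioi] with r hra (hr0 : 0 < r)
    have h1 : ∀ θ ∈ Ioo 0 π, ENNReal.ofReal r * (ENNReal.ofReal (r * Real.sin θ) * ENNReal.ofReal
          (Real.exp (-c * √(r ^ 2)) / (16 * π ^ 2 * √(r ^ 2) *
            √(r ^ 2 + a ^ 2 - 2 * r * a * Real.cos θ)))) =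
        ENNReal.ofReal (r * Real.exp (-c * r) / (16 * π ^ 2)) * ENNReal.ofReal
          (Real.sin θ / √(r ^ 2 + a ^ 2 - 2 * r * a * Real.cos θ)) := by
      intro θ hθ
      have hs := (Real.sin_pos_of_mem_Ioo hθ).le
      rw [← ENNReal.ofReal_mul (by positivity), ← ENNReal.ofReal_mul (by positivity),
        ← ENNReal.ofReal_mul (by positivity), Real.sqrt_sq hr0.le]
      congr 1
      rw [div_mul_div_comm, mul_div_assoc', mul_div_assoc', mul_right_comm _ r,
        show r * (r * Real.sin θ * Real.exp (-c * r)) =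
          (r * Real.exp (-c * r) * Real.sin θ) * r by ring, mul_div_mul_right _ _ hr0.ne']
    rw [setLIntegral_congr_fun measurableSet_Ioo h1, lintegral_const_mul _ (by fun_prop),
      lintegral_sin_div r a hr0 ha hra, ← ENNReal.ofReal_mul (by positivity),
      ← ENNReal.ofReal_mul (by positivity)]
    congr 1
    field_simp
    ring
  rw [hr, lintegral_const_mul _ (by fun_prop), lintegral_exp_mul_min c a hc ha,
    ← ENNReal.ofReal_mul (by positivity), ← ENNReal.ofReal_mul (by positivity)]
  congr 1
  field_simp
  ring
end
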